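/- Let p be odd, v : ℝ^p → ℝ^p continuously differentiable and homogeneous of degree 2, admitting a symmetric positive definite bilinear form B with B(v(ω), ω) = 0 for all ω. Suppose the nonzero zero set of v is a union of finitely many punctured lines ℓ₁, …, ℓ_N (distinct one-dimensional subspaces), all nondegenerate in the sense that at every nonzero zero ω of v, zero is a root of algebraic multiplicity exactly 1 of the characteristic polynomial of the Jacobian Dv(ω). Then the number N of straight lines of steady motions is odd. -/

import Mathlib

/-- The Jacobian matrix of a map `v : ℝᵖ → ℝᵖ` at a point `ω`. -/
noncomputable def jacobianMatrix {p : ℕ} (v : (Fin p → ℝ) → (Fin p → ℝ))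
    (ω : Fin p → ℝ) : Matrix (Fin p) (Fin p) ℝ :=
  Matrix.of fun i j => fderiv ℝ v ω (Pi.single j 1) i

set_option linter.unusedSectionVars false

open MeasureTheory Set Filter Topology Metric

section Degree

variable {E : Type*} [NormedAddCommGroup E] [InnerProductSpace ℝ E] [FiniteDimensional ℝ E]

lemma poly_det (A : E →L[ℝ] E) : ∃ q : Polynomial ℝ,
    q.degree < ((Module.finrank ℝ E + 1 : ℕ) : WithBot ℕ) ∧
    ∀ t : ℝ, q.eval t = (1 + t • A).det := by
  classical
  let b := Module.finBasis ℝ E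
  let M := LinearMap.toMatrix b b A.toLinearMap
  refine ⟨((Polynomial.X : Polynomial ℝ) • M.map Polynomial.C +
    (1 : Matrix (Fin (Module.finrank ℝ E)) (Fin (Module.finrank ℝ E)) ℝ).map Polynomial.C).det, ?_, ?_⟩
  · refine lt_of_le_of_lt Polynomial.degree_le_natDegree ?_
    have h := Polynomial.natDegree_det_X_add_C_le M 1
    rw [Fintype.card_fin] at h
    exact_mod_cast Nat.lt_succ_of_le h
  · intro t
    have h1 : (1 + t • A).det = (1 + t • M).det := by
      change LinearMap.det ((1 + t • A : E →L[ℝ] E) : E →ₗ[ℝ] E) = _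
      rw [← LinearMap.det_toMatrix b]
      congr 1
      have : ((1 + t • A : E →L[ℝ] E) : E →ₗ[ℝ] E) = LinearMap.id + t • (A : E →ₗ[ℝ] E) := by
        ext x; simp
      rw [this, map_add, LinearMap.toMatrix_id, map_smul]
    rw [h1, ← Polynomial.coe_evalRingHom, RingHom.map_det]
    congr 1
    ext i j
    simp [Matrix.one_apply, add_comm]
    split_ifs <;> simp [mul_comm]

lemma interp_det : ∃ l : Fin (Module.finrank ℝ E + 1) → Polynomial ℝ,
    ∀ (A : E →L[ℝ] E) (t : ℝ),
      (1 + t • A).det = ∑ j : Fin (Module.finrank ℝ E + 1), (1 + (j : ℝ) • A).det * (l j).eval t := by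
  refine ⟨fun j => Lagrange.basis Finset.univ (fun j : Fin (Module.finrank ℝ E + 1) => (j : ℝ)) j,
    fun A t => ?_⟩
  obtain ⟨q, hq, hqe⟩ := poly_det A
  have h := Lagrange.eq_interpolate (s := Finset.univ)
    (v := fun j : Fin (Module.finrank ℝ E + 1) => (j : ℝ)) (f := q) (by
      intro i _ j _ h
      simpa [Fin.ext_iff] using h) (by simpa using hq)
  rw [← hqe, h, Lagrange.interpolate_apply, Polynomial.eval_finsetSum]
  simp [hqe]

variable [MeasurableSpace E] [BorelSpace E]

lemma integral_det_small [Nontrivial E] (g : E → E) (hg : ContDiff ℝ 1 g) (hc : HasCompactSupport g)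
    (R : ℝ) (hR : ∀ x, R ≤ ‖x‖ → g x = 0) :
    ∃ t0 > 0, ∀ t : ℝ, 0 < t → t < t0 →
      ∫ x in ball (0 : E) R, (1 + t • fderiv ℝ g x).det = volume.real (ball (0 : E) R) := by
  obtain ⟨C, hC⟩ := ContDiff.lipschitzWith_of_hasCompactSupport hc hg one_ne_zero
  obtain ⟨D, hD⟩ := (hc.fderiv (𝕜 := ℝ)).exists_bound_of_continuous (hg.continuous_fderiv one_ne_zero)
  have hD0 : 0 ≤ D := (norm_nonneg _).trans (hD 0)
  have hdet : ∀ᶠ A : E →L[ℝ] E in 𝓝 0, 0 < (1 + A).det := by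
    have hcont : Continuous fun A : E →L[ℝ] E => (1 + A).det :=
      ContinuousLinearMap.continuous_det.comp (continuous_const.add continuous_id)
    refine hcont.continuousAt.eventually (lt_mem_nhds ?_)
    simp only [add_zero]
    have : (1 : E →L[ℝ] E).det = 1 := by
      change LinearMap.det ((1 : E →L[ℝ] E) : E →ₗ[ℝ] E) = 1
      exact LinearMap.det_id
    rw [this]; exact one_pos
  obtain ⟨η, hη, hball⟩ := Metric.eventually_nhds_iff.1 hdet
  refine ⟨min (η / (D + 1)) (1 / (C + 1)), lt_min (by positivity) (by positivity), ?_⟩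
  intro t ht htt
  have ht1 : t * (D + 1) < η := by
    rw [← lt_div_iff₀ (by positivity)]; exact htt.trans_le (min_le_left _ _)
  have ht2 : t * (C + 1) < 1 := by
    rw [← lt_div_iff₀ (by positivity)]; exact htt.trans_le (min_le_right _ _)
  have hpos : ∀ x, 0 < (1 + t • fderiv ℝ g x).det := by
    intro x
    apply hball
    rw [dist_zero_right, norm_smul, Real.norm_of_nonneg ht.le]
    nlinarith [hD x]
  let G : E → E := fun x => x + t • g x
  have happ : ApproximatesLinearOn G ((ContinuousLinearEquiv.refl ℝ E : E ≃L[ℝ] E) : E →L[ℝ] E) univ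
      (Real.toNNReal (t * C)) := by
    intro x _ y _
    have h1 : G x - G y - ((ContinuousLinearEquiv.refl ℝ E : E ≃L[ℝ] E) : E →L[ℝ] E) (x - y)
        = t • (g x - g y) := by
      simp only [G, ContinuousLinearEquiv.coe_refl, ContinuousLinearMap.coe_id', id, smul_sub]
      abel
    rw [h1, norm_smul, Real.norm_of_nonneg ht.le, Real.coe_toNNReal _ (by positivity), mul_assoc]
    have := hC.dist_le_mul x y
    rw [dist_eq_norm, dist_eq_norm] at this
    gcongr
  have hlt : Real.toNNReal (t * C) <
      ‖(((ContinuousLinearEquiv.refl ℝ E : E ≃L[ℝ] E).symm : E ≃L[ℝ] E) : E →L[ℝ] E)‖₊⁻¹ := by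
    have : ‖(((ContinuousLinearEquiv.refl ℝ E : E ≃L[ℝ] E).symm : E ≃L[ℝ] E) : E →L[ℝ] E)‖₊ = 1 := by
      ext
      exact ContinuousLinearMap.norm_id
    rw [this, inv_one, Real.toNNReal_lt_one]
    nlinarith
  have hinj : Function.Injective G := by
    have := happ.injOn (Or.inr hlt)
    exact fun x y h => this (mem_univ x) (mem_univ y) h
  have hsurj : Function.Surjective G := happ.surjective (Or.inr hlt)
  have himg : G '' ball 0 R = ball 0 R := by
    ext y
    constructor
    · rintro ⟨x, hx, rfl⟩
      by_contra hcon
      have h1 : R ≤ ‖G x‖ := by simpa using hcon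
      have h2 : G (G x) = G x := by
        change G x + t • g (G x) = G x
        rw [hR _ h1]; simp
      have h3 := hinj h2
      rw [h3] at hcon
      exact hcon hx
    · intro hy
      obtain ⟨x, rfl⟩ := hsurj y
      refine ⟨x, ?_, rfl⟩
      by_contra hcon
      have h1 : R ≤ ‖x‖ := by simpa using hcon
      have h2 : G x = x := by
        change x + t • g x = x
        rw [hR _ h1]; simp
      rw [h2] at hy
      exact hcon hy
  have hder : ∀ x ∈ ball (0 : E) R, HasFDerivWithinAt G (1 + t • fderiv ℝ g x) (ball 0 R) x := by
    intro x _
    have := (hg.differentiable one_ne_zero x).hasFDerivAt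
    exact ((hasFDerivAt_id x).add (this.const_smul t)).hasFDerivWithinAt
  have := integral_image_eq_integral_abs_det_fderiv_smul volume measurableSet_ball hder
    (hinj.injOn) (fun _ => (1 : ℝ))
  rw [himg] at this
  simp only [smul_eq_mul, mul_one, abs_of_pos (hpos _)] at this
  rw [← this]
  simp

lemma integral_det [Nontrivial E] (g : E → E) (hg : ContDiff ℝ 1 g) (hc : HasCompactSupport g)
    (R : ℝ) (hR : ∀ x, R ≤ ‖x‖ → g x = 0) :
    ∫ x in ball (0 : E) R, (1 + fderiv ℝ g x).det = volume.real (ball (0 : E) R) := by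
  obtain ⟨t0, ht0, H⟩ := integral_det_small g hg hc R hR
  obtain ⟨l, hl⟩ := interp_det (E := E)
  have hdc : ∀ t : ℝ, Continuous fun x => (1 + t • fderiv ℝ g x).det := fun t =>
    ContinuousLinearMap.continuous_det.comp
      (continuous_const.add ((hg.continuous_fderiv one_ne_zero).const_smul t))
  have hint : ∀ t : ℝ, IntegrableOn (fun x => (1 + t • fderiv ℝ g x).det) (ball (0 : E) R) := fun t =>
    ((hdc t).continuousOn.integrableOn_compact (isCompact_closedBall (0 : E) R)).mono_set
      ball_subset_closedBall
  let P : Polynomial ℝ := ∑ j : Fin (Module.finrank ℝ E + 1), Polynomial.C (∫ x in ball (0 : E) R,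
    (1 + (j : ℝ) • fderiv ℝ g x).det) * l j
  have hP : ∀ t, ∫ x in ball (0 : E) R, (1 + t • fderiv ℝ g x).det = P.eval t := by
    intro t
    simp_rw [hl _ t]
    rw [integral_finsetSum _ (fun (j : Fin (Module.finrank ℝ E + 1)) _ => (hint (j : ℝ)).mul_const _)]
    simp only [P, Polynomial.eval_finsetSum, Polynomial.eval_mul, Polynomial.eval_C]
    refine Finset.sum_congr rfl fun j _ => ?_
    rw [integral_mul_const]
  have hPC : P = Polynomial.C (volume.real (ball (0 : E) R)) := by
    apply Polynomial.eq_of_infinite_eval_eq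
    refine (Ioo_infinite ht0).mono ?_
    intro t ht
    simp only [mem_ofPred_eq, Polynomial.eval_C]
    rw [← hP, H t ht.1 ht.2]
  have := hP 1
  rw [hPC] at this
  simpa using this

lemma exists_radius {F : Type*} [Zero F] (f : E → F) (hc : HasCompactSupport f) :
    ∃ R : ℝ, 0 < R ∧ ∀ x, R ≤ ‖x‖ → f x = 0 := by
  obtain ⟨R, hR⟩ := hc.isCompact.isBounded.subset_ball_lt 0 0
  refine ⟨R, hR.1, fun x hx => ?_⟩
  by_contra h
  have := hR.2 (subset_tsupport f h)
  simp at this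
  linarith

lemma det_transv (L : E →L[ℝ] ℝ) (a : E) : (1 + L.smulRight a : E →L[ℝ] E).det = 1 + L a := by
  have h := LinearMap.transvection.det (L : E →ₗ[ℝ] ℝ) a
  have h2 : ((1 + L.smulRight a : E →L[ℝ] E) : E →ₗ[ℝ] E) = LinearMap.transvection (L : E →ₗ[ℝ] ℝ) a := by
    ext x; simp [LinearMap.transvection.apply]
  change LinearMap.det ((1 + L.smulRight a : E →L[ℝ] E) : E →ₗ[ℝ] E) = _
  rw [h2, h]; rfl

lemma det_comp' (A B : E →L[ℝ] E) : (A.comp B).det = A.det * B.det := by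
  change LinearMap.det ((A.comp B : E →L[ℝ] E) : E →ₗ[ℝ] E) = _
  exact LinearMap.det_comp (A : E →ₗ[ℝ] E) (B : E →ₗ[ℝ] E)

lemma integral_dgamma [Nontrivial E] (g : E → E) (hg : ContDiff ℝ 1 g) (hc : HasCompactSupport g)
    (γ : E → ℝ) (hγ : ContDiff ℝ 1 γ) (hγc : HasCompactSupport γ) (a : E) :
    ∫ x, fderiv ℝ γ (x + g x) a * (1 + fderiv ℝ g x).det = 0 := by
  obtain ⟨R1, hR1, h1⟩ := exists_radius g hc
  obtain ⟨R2, hR2, h2⟩ := exists_radius γ hγc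
  obtain ⟨R3, hR3, h3⟩ := exists_radius (fderiv ℝ γ) (hγc.fderiv (𝕜 := ℝ))
  let R := max R1 (max R2 R3)
  have hRg : ∀ x, R ≤ ‖x‖ → g x = 0 := fun x hx => h1 x ((le_max_left _ _).trans hx)
  have hRγ : ∀ x, R ≤ ‖x‖ → γ x = 0 := fun x hx =>
    h2 x (((le_max_left _ _).trans (le_max_right _ _)).trans hx)
  have hRd : ∀ x, R ≤ ‖x‖ → fderiv ℝ γ x = 0 := fun x hx =>
    h3 x (((le_max_right _ _).trans (le_max_right _ _)).trans hx)
  let k : E → E := fun x => g x + γ (x + g x) • a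
  have hk : ContDiff ℝ 1 k := by
    have : ContDiff ℝ 1 fun x => γ (x + g x) := hγ.comp (contDiff_id.add hg)
    exact hg.add (this.smul contDiff_const)
  have hkR : ∀ x, R ≤ ‖x‖ → k x = 0 := by
    intro x hx
    simp only [k, hRg x hx, add_zero, hRγ x hx, zero_smul]
  have hkc : HasCompactSupport k := by
    refine HasCompactSupport.intro (isCompact_closedBall (0 : E) R) fun x hx => hkR x ?_
    simp at hx
    exact hx.le
  have e1 := integral_det g hg hc R hRg
  have e2 := integral_det k hk hkc R hkR
  have hder : ∀ x, (1 + fderiv ℝ k x).det =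
      (1 + fderiv ℝ g x).det + fderiv ℝ γ (x + g x) a * (1 + fderiv ℝ g x).det := by
    intro x
    have d1 := (hg.differentiable one_ne_zero x).hasFDerivAt
    have d2 : HasFDerivAt (fun x => x + g x) (1 + fderiv ℝ g x) x := (hasFDerivAt_id x).add d1
    have d3 := (hγ.differentiable one_ne_zero (x + g x)).hasFDerivAt
    have d4 : HasFDerivAt (fun x => γ (x + g x)) ((fderiv ℝ γ (x + g x)).comp (1 + fderiv ℝ g x)) x :=
      d3.comp x d2
    have d5 : HasFDerivAt k (fderiv ℝ g x +
      ((fderiv ℝ γ (x + g x)).comp (1 + fderiv ℝ g x)).smulRight a) x := d1.add (d4.smul_const a)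
    rw [d5.fderiv]
    have : 1 + (fderiv ℝ g x + ((fderiv ℝ γ (x + g x)).comp (1 + fderiv ℝ g x)).smulRight a)
        = (1 + (fderiv ℝ γ (x + g x)).smulRight a).comp (1 + fderiv ℝ g x) := by
      ext y
      simp [add_smul]
      abel
    rw [this, det_comp', det_transv]
    ring
  have c1 : Continuous fun x => (1 + fderiv ℝ g x).det :=
    ContinuousLinearMap.continuous_det.comp
      (continuous_const.add (hg.continuous_fderiv one_ne_zero))
  have c2 : Continuous fun x => fderiv ℝ γ (x + g x) a * (1 + fderiv ℝ g x).det := by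
    refine Continuous.mul ?_ c1
    exact ((hγ.continuous_fderiv one_ne_zero).comp (continuous_id.add hg.continuous)).clm_apply
      continuous_const
  have i1 : IntegrableOn (fun x => (1 + fderiv ℝ g x).det) (ball (0 : E) R) :=
    (c1.continuousOn.integrableOn_compact (isCompact_closedBall (0 : E) R)).mono_set
      ball_subset_closedBall
  have i2 : IntegrableOn (fun x => fderiv ℝ γ (x + g x) a * (1 + fderiv ℝ g x).det)
      (ball (0 : E) R) :=
    (c2.continuousOn.integrableOn_compact (isCompact_closedBall (0 : E) R)).mono_set
      ball_subset_closedBall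
  simp_rw [hder] at e2
  rw [integral_add i1 i2, e1] at e2
  rw [← setIntegral_eq_integral_of_forall_compl_eq_zero (s := ball (0 : E) R)]
  · linarith
  · intro x hx
    have hx' : R ≤ ‖x‖ := by simpa using hx
    rw [hRg x hx', add_zero, hRd x hx']
    simp

theorem degree_one [Nontrivial E] (g : E → E) (hg : ContDiff ℝ 1 g) (hc : HasCompactSupport g)
    (φ : E → ℝ) (hφ : ContDiff ℝ 1 φ) (hφc : HasCompactSupport φ) :
    ∫ x, φ (x + g x) * (1 + fderiv ℝ g x).det = ∫ x, φ x := by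
  obtain ⟨R1, hR1, h1⟩ := exists_radius g hc
  obtain ⟨R2, hR2, h2⟩ := exists_radius φ hφc
  obtain ⟨R3, hR3, h3⟩ := exists_radius (fderiv ℝ φ) (hφc.fderiv (𝕜 := ℝ))
  obtain ⟨Mg, hMg⟩ := hc.exists_bound_of_continuous hg.continuous
  have hMg0 : 0 ≤ Mg := (norm_nonneg _).trans (hMg 0)
  obtain ⟨e, he⟩ := exists_norm_eq E (c := R1 + Mg + R2) (by positivity)
  have c1 : Continuous fun x => (1 + fderiv ℝ g x).det :=
    ContinuousLinearMap.continuous_det.comp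
      (continuous_const.add (hg.continuous_fderiv one_ne_zero))
  have cG : Continuous fun x => x + g x := continuous_id.add hg.continuous
  let F : ℝ → E → ℝ := fun s x => φ (x + g x - s • e) * (1 + fderiv ℝ g x).det
  let F' : ℝ → E → ℝ := fun s x => - (fderiv ℝ φ (x + g x - s • e) e) * (1 + fderiv ℝ g x).det
  have cF : ∀ s, Continuous (F s) := fun s =>
    (hφ.continuous.comp (cG.sub continuous_const)).mul c1
  have cF' : Continuous (Function.uncurry F') := by
    have a1 : Continuous fun q : ℝ × E => q.2 + g q.2 - q.1 • e :=
      (cG.comp continuous_snd).sub (continuous_fst.smul continuous_const)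
    exact (((hφ.continuous_fderiv one_ne_zero).comp a1).clm_apply
      continuous_const).neg.mul (c1.comp continuous_snd)
  have far : ∀ s x, ∀ r, r + |s| * ‖e‖ + Mg ≤ ‖x‖ → r ≤ ‖x + g x - s • e‖ := by
    intro s x r hx
    have := hMg x
    have t1 : ‖x‖ ≤ ‖x + g x - s • e‖ + ‖g x‖ + ‖s • e‖ := by
      calc ‖x‖ = ‖(x + g x - s • e) - g x + s • e‖ := by congr 1; abel
        _ ≤ _ := (norm_add_le _ _).trans (by gcongr; exact norm_sub_le _ _)
    rw [norm_smul, Real.norm_eq_abs] at t1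
    linarith
  have hderiv : ∀ s, HasDerivAt (fun s => ∫ x, F s x) 0 s := by
    intro s
    let Rb := R3 + (|s| + 1) * ‖e‖ + Mg
    have hcomp : IsCompact (closedBall s 1 ×ˢ closedBall (0 : E) Rb) :=
      (isCompact_closedBall _ _).prod (isCompact_closedBall _ _)
    obtain ⟨C, hC⟩ := hcomp.exists_bound_of_continuousOn cF'.continuousOn
    have key := (hasDerivAt_integral_of_dominated_loc_of_deriv_le (μ := (volume : Measure E))
      (F := F) (F' := F') (x₀ := s) (s := ball s 1)
      (bound := (closedBall (0 : E) Rb).indicator fun _ => C) (ball_mem_nhds s one_pos)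
      (Eventually.of_forall fun s => (cF s).aestronglyMeasurable) ?_ ?_ ?_ ?_ ?_).2
    · have hz : ∫ x, F' s x = 0 := by
        have hφ' : ContDiff ℝ 1 fun y => φ (y - s • e) := hφ.comp (contDiff_id.sub contDiff_const)
        have hφc' : HasCompactSupport fun y => φ (y - s • e) := by
          exact hφc.comp_homeomorph (Homeomorph.subRight (s • e))
        have := integral_dgamma g hg hc _ hφ' hφc' e
        simp_rw [fderiv_comp_sub] at this
        simp only [F', neg_mul]
        rw [integral_neg, this, neg_zero]
      rwa [hz] at key
    · refine (cF s).integrable_of_hasCompactSupport ?_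
      refine HasCompactSupport.intro (isCompact_closedBall (0 : E) (R2 + |s| * ‖e‖ + Mg)) fun x hx => ?_
      simp only [mem_closedBall, dist_zero_right, not_le] at hx
      simp only [F, h2 _ (far s x R2 hx.le), zero_mul]
    · exact (cF'.comp (Continuous.prodMk_right s)).aestronglyMeasurable
    · refine Eventually.of_forall fun x t ht => ?_
      by_cases hx : x ∈ closedBall (0 : E) Rb
      · rw [indicator_of_mem hx]
        exact hC (t, x) ⟨ball_subset_closedBall ht, hx⟩
      · rw [indicator_of_notMem hx]
        simp only [mem_closedBall, dist_zero_right, not_le] at hx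
        have ht' : |t| ≤ |s| + 1 := by
          rw [mem_ball, Real.dist_eq] at ht
          have := abs_add_le (t - s) s
          rw [sub_add_cancel] at this
          linarith
        have : R3 ≤ ‖x + g x - t • e‖ := by
          apply far
          refine le_trans ?_ hx.le
          simp only [Rb]
          gcongr
        simp [F', h3 _ this]
    · rw [integrable_indicator_iff measurableSet_closedBall]
      exact integrableOn_const (measure_closedBall_lt_top.ne)
    · refine Eventually.of_forall fun x t _ => ?_
      have d0 : HasDerivAt (fun t : ℝ => x + g x - t • e) (-e) t := by
        simpa using ((hasDerivAt_id t).smul_const e).const_sub (x + g x)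
      have d1 := (hφ.differentiable one_ne_zero (x + g x - t • e)).hasFDerivAt.comp_hasDerivAt t d0
      have d2 := d1.mul_const ((1 + fderiv ℝ g x).det)
      simpa [F, F'] using d2
  have hconst := is_const_of_deriv_eq_zero (f := fun s => ∫ x, F s x)
    (fun s => (hderiv s).differentiableAt) (fun s => (hderiv s).deriv) 0 1
  have e0 : (∫ x, F 0 x) = ∫ x, φ (x + g x) * (1 + fderiv ℝ g x).det := by simp [F]
  have e1 : (∫ x, F 1 x) = ∫ x, φ (x - e) := by
    congr 1
    ext x
    simp only [F, one_smul]
    by_cases hx : x ∈ tsupport g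
    · have hxR : ‖x‖ ≤ R1 := by
        have : tsupport g ⊆ closedBall 0 R1 := by
          refine closure_minimal (fun z hz => ?_) isClosed_closedBall
          by_contra hcon
          simp only [mem_closedBall, dist_zero_right, not_le] at hcon
          exact hz (h1 z hcon.le)
        simpa using this hx
      have b1 := hMg x
      have b2 : ‖e‖ ≤ ‖x - e‖ + ‖x‖ := by
        have := norm_sub_le x (x - e); rw [sub_sub_cancel] at this; linarith
      have b3 : ‖x - e‖ ≤ ‖x + g x - e‖ + ‖g x‖ := by
        have := norm_sub_le (x + g x - e) (g x)
        have e' : x + g x - e - g x = x - e := by abel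
        rwa [e'] at this
      rw [h2 (x + g x - e) (by linarith), h2 (x - e) (by linarith), zero_mul]
    · have hg0 : g x = 0 := image_eq_zero_of_notMem_tsupport hx
      have hd0 : fderiv ℝ g x = 0 := by
        have := tsupport_fderiv_subset ℝ (f := g)
        exact image_eq_zero_of_notMem_tsupport fun h => hx (this h)
      have hdet : (1 : E →L[ℝ] E).det = 1 := by
        change LinearMap.det ((1 : E →L[ℝ] E) : E →ₗ[ℝ] E) = 1
        exact LinearMap.det_id
      rw [hg0, hd0, add_zero, add_zero, hdet, mul_one]
  rw [← e0, hconst, e1, integral_sub_right_eq_self φ e]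

end Degree

section Field

variable {E : Type*} [NormedAddCommGroup E] [InnerProductSpace ℝ E] [FiniteDimensional ℝ E]
  [MeasurableSpace E] [BorelSpace E]

lemma det_smul' (c : ℝ) (A : E →L[ℝ] E) : (c • A).det = c ^ Module.finrank ℝ E * A.det :=
  LinearMap.det_smul c (A : E →ₗ[ℝ] E)

lemma fderiv_hom (v : E → E) (hhom : ∀ (c : ℝ) (x : E), v (c • x) = c ^ 2 • v x)
    (hv : ContDiff ℝ 1 v) (c : ℝ) (hc : c ≠ 0) (x : E) :
    fderiv ℝ v (c • x) = c • fderiv ℝ v x := by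
  have h := fderiv_comp_smul (f := v) (x := x) c
  have h2 : (fun x => v (c • x)) = c ^ 2 • v := by ext1 x; exact hhom c x
  rw [h2, fderiv_const_smul (hv.differentiable one_ne_zero x)] at h
  have h3 : c • (c • fderiv ℝ v x) = c • fderiv ℝ v (c • x) := by
    rw [← h, smul_smul, sq]
  exact ((smul_right_injective _ hc) h3).symm

lemma euler_id (v : E → E) (hhom : ∀ (c : ℝ) (x : E), v (c • x) = c ^ 2 • v x)
    (hv : ContDiff ℝ 1 v) (x : E) : fderiv ℝ v x x = (2 : ℝ) • v x := by
  have d0 : HasDerivAt (fun t : ℝ => t • x) x 1 := by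
    simpa using (hasDerivAt_id (1 : ℝ)).smul_const x
  have d1 : HasFDerivAt v (fderiv ℝ v x) ((1 : ℝ) • x) := by
    rw [one_smul]; exact (hv.differentiable one_ne_zero x).hasFDerivAt
  have d2 := d1.comp_hasDerivAt (1 : ℝ) d0
  have d3 : HasDerivAt (fun t : ℝ => t ^ 2 • v x) ((2 : ℝ) • v x) 1 := by
    simpa using ((hasDerivAt_pow 2 (1 : ℝ))).smul_const (v x)
  have e : (v ∘ fun t : ℝ => t • x) = fun t : ℝ => t ^ 2 • v x := by
    ext1 t; exact hhom t x
  rw [e] at d2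
  exact d2.unique d3

lemma norm_le_of_orth (v : E → E) (horth : ∀ x, inner ℝ (v x) x = 0) (c : ℝ) (z : E) :
    ‖z‖ ≤ ‖z + c • v z‖ := by
  have h1 : inner ℝ (z + c • v z) z = ‖z‖ ^ 2 := by
    rw [inner_add_left, inner_smul_left, horth, mul_zero, add_zero, real_inner_self_eq_norm_sq]
  have h2 := real_inner_le_norm (z + c • v z) z
  rw [h1, sq] at h2
  rcases (norm_nonneg z).eq_or_lt with h | h
  · rw [← h]; positivity
  · exact le_of_mul_le_mul_right h2 h

theorem total_integral [Nontrivial E] (v : E → E) (hv : ContDiff ℝ 1 v)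
    (horth : ∀ x, inner ℝ (v x) x = 0) (c : ℝ)
    (φ : E → ℝ) (hφ : ContDiff ℝ 1 φ) (hφc : HasCompactSupport φ) :
    ∫ z, φ (z + c • v z) * (1 + c • fderiv ℝ v z).det = ∫ x, φ x := by
  obtain ⟨R, hR, h⟩ := exists_radius φ hφc
  let χ : ContDiffBump (0 : E) := ⟨R, R + 1, hR, by linarith⟩
  let g : E → E := fun z => χ z • (c • v z)
  have hg : ContDiff ℝ 1 g := χ.contDiff.smul (hv.const_smul c)
  have hgc : HasCompactSupport g := χ.hasCompactSupport.smul_right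
  rw [← degree_one g hg hgc φ hφ hφc]
  congr 1
  ext z
  by_cases hz : ‖z‖ < R
  · have hzb : z ∈ ball (0 : E) χ.rIn := by simpa [χ] using hz
    have he : g =ᶠ[𝓝 z] c • v := by
      filter_upwards [χ.eventuallyEq_one_of_mem_ball hzb] with x hx
      simp [g, hx]
    have h1 : g z = c • v z := he.eq_of_nhds
    have h2 : fderiv ℝ g z = c • fderiv ℝ v z := by
      rw [he.fderiv_eq, fderiv_const_smul (hv.differentiable one_ne_zero z)]
    rw [h1, h2]
  · push Not at hz
    have h1 := norm_le_of_orth v horth c z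
    have h2 := norm_le_of_orth v horth (χ z * c) z
    have e2 : z + g z = z + (χ z * c) • v z := by simp [g, smul_smul]
    rw [e2, h _ (hz.trans h1), h _ (hz.trans h2), zero_mul, zero_mul]

theorem bounded_part (hp : Odd (Module.finrank ℝ E)) (v : E → E) (hv : ContDiff ℝ 1 v)
    (hhom : ∀ (c : ℝ) (x : E), v (c • x) = c ^ 2 • v x)
    (φ : E → ℝ) (hφ : Continuous φ) (R : ℝ) (hR : 0 ≤ R) :
    Tendsto (fun ε : ℝ => ∫ z in closedBall (0 : E) (ε * R),
      φ (z + (ε ^ 2)⁻¹ • v z) * (1 + (ε ^ 2)⁻¹ • fderiv ℝ v z).det) (𝓝[>] 0) (𝓝 0) := by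
  let f : ℝ → E → ℝ := fun ε x => φ (ε • x + v x) * (ε • (1 : E →L[ℝ] E) + fderiv ℝ v x).det
  have hf : Continuous (Function.uncurry f) := by
    have a1 : Continuous fun q : ℝ × E => q.1 • q.2 + v q.2 :=
      (continuous_fst.smul continuous_snd).add (hv.continuous.comp continuous_snd)
    have a2 : Continuous fun q : ℝ × E => q.1 • (1 : E →L[ℝ] E) + fderiv ℝ v q.2 :=
      (continuous_fst.smul continuous_const).add
        ((hv.continuous_fderiv one_ne_zero).comp continuous_snd)
    exact (hφ.comp a1).mul (ContinuousLinearMap.continuous_det.comp a2)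
  have hcont := continuous_parametric_integral_of_continuous (μ := (volume : Measure E)) hf
    (isCompact_closedBall (0 : E) R)
  have hzero : ∫ x in closedBall (0 : E) R, f 0 x = 0 := by
    have hodd : ∀ x, (closedBall (0 : E) R).indicator (f 0) (-x)
        = - (closedBall (0 : E) R).indicator (f 0) x := by
      intro x
      have e1 : v (-x) = v x := by simpa using hhom (-1) x
      have e2 : fderiv ℝ v (-x) = (-1 : ℝ) • fderiv ℝ v x := by
        simpa using fderiv_hom v hhom hv (-1) (by norm_num) x
      by_cases hx : x ∈ closedBall (0 : E) R
      · have hx' : -x ∈ closedBall (0 : E) R := by simpa using hx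
        rw [indicator_of_mem hx, indicator_of_mem hx']
        simp only [f, zero_smul, zero_add, e1, e2, det_smul', hp.neg_one_pow]
        ring
      · have hx' : -x ∉ closedBall (0 : E) R := by simpa using hx
        rw [indicator_of_notMem hx, indicator_of_notMem hx', neg_zero]
    have h1 := integral_neg_eq_self ((closedBall (0 : E) R).indicator (f 0)) volume
    simp_rw [hodd] at h1
    rw [integral_neg, integral_indicator measurableSet_closedBall] at h1
    linarith
  have hlim : Tendsto (fun ε : ℝ => ∫ x in closedBall (0 : E) R, f ε x) (𝓝[>] 0) (𝓝 0) := by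
    have := hcont.tendsto 0
    rw [hzero] at this
    exact this.mono_left nhdsWithin_le_nhds
  refine hlim.congr' ?_
  filter_upwards [self_mem_nhdsWithin] with ε hε
  have hε : 0 < ε := hε
  have hs := Measure.setIntegral_comp_smul_of_pos (volume : Measure E)
    (fun z => φ (z + (ε ^ 2)⁻¹ • v z) * (1 + (ε ^ 2)⁻¹ • fderiv ℝ v z).det)
    (closedBall (0 : E) R) hε
  rw [smul_closedBall _ _ hR, smul_zero, Real.norm_of_nonneg hε.le] at hs
  have hs2 : (∫ z in closedBall (0 : E) (ε * R),
      φ (z + (ε ^ 2)⁻¹ • v z) * (1 + (ε ^ 2)⁻¹ • fderiv ℝ v z).det) =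
      ε ^ Module.finrank ℝ E * ∫ x in closedBall (0 : E) R, φ (ε • x + (ε ^ 2)⁻¹ • v (ε • x)) *
        (1 + (ε ^ 2)⁻¹ • fderiv ℝ v (ε • x)).det := by
    rw [hs, smul_eq_mul, ← mul_assoc, mul_inv_cancel₀ (by positivity), one_mul]
  rw [hs2, ← integral_const_mul]
  congr 1
  ext x
  have e1 : (ε ^ 2)⁻¹ • v (ε • x) = v x := by
    rw [hhom, smul_smul, inv_mul_cancel₀ (by positivity), one_smul]
  have e2 : ε • (1 + (ε ^ 2)⁻¹ • fderiv ℝ v (ε • x)) = ε • (1 : E →L[ℝ] E) + fderiv ℝ v x := by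
    rw [fderiv_hom v hhom hv ε hε.ne', smul_add, smul_smul, smul_smul]
    have : ε * ((ε ^ 2)⁻¹ * ε) = 1 := by field_simp
    rw [← mul_assoc] at this
    rw [this, one_smul]
  simp only [f]
  rw [e1, ← e2, det_smul']
  ring

/-- Orthogonal projection off a unit vector. -/
noncomputable def projc (u : E) : E →L[ℝ] E := 1 - (innerSL ℝ u).smulRight u

/-- Anisotropic scaling. -/
noncomputable def Lmap (u : E) (δ : ℝ) : E →L[ℝ] E := (innerSL ℝ u).smulRight u + δ • projc u

/-- The rescaled field, extended continuously to `δ = 0`. -/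
noncomputable def Vf (v : E → E) (u : E) (δ : ℝ) (w : E) : E :=
  ∫ s in (0 : ℝ)..1, fderiv ℝ v ((inner ℝ u w : ℝ) • u + (s * δ) • projc u w) (projc u w)

/-- The rescaled map. -/
noncomputable def Kf (v : E → E) (u : E) (δ : ℝ) (w : E) : E := Lmap u δ w + Vf v u δ w

/-- The derivative of the rescaled map. -/
noncomputable def Mf (v : E → E) (u : E) (a : ℝ) (δ : ℝ) (w : E) : E →L[ℝ] E :=
  (innerSL ℝ u).smulRight (u + (max (inner ℝ u w) a)⁻¹ •
    ((2 : ℝ) • Vf v u δ w - fderiv ℝ v (Lmap u δ w) (projc u w))) + δ • projc u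
    + (fderiv ℝ v (Lmap u δ w)).comp (projc u)

/-- The box around a ray. -/
def Qset (u : E) (a M C : ℝ) : Set E :=
  {w | a ≤ (inner ℝ u w : ℝ) ∧ (inner ℝ u w : ℝ) ≤ M ∧ ‖projc u w‖ ≤ C}

lemma projc_apply (u w : E) : projc u w = w - (inner ℝ u w : ℝ) • u := by simp [projc]

lemma Lmap_apply (u w : E) (δ : ℝ) : Lmap u δ w = (inner ℝ u w : ℝ) • u + δ • projc u w := by
  simp [Lmap]

lemma inner_projc (u : E) (hu : ‖u‖ = 1) (w : E) : (inner ℝ u (projc u w) : ℝ) = 0 := by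
  rw [projc_apply, inner_sub_right, inner_smul_right, real_inner_self_eq_norm_sq, hu]; ring

lemma inner_Lmap (u : E) (hu : ‖u‖ = 1) (w : E) (δ : ℝ) :
    (inner ℝ u (Lmap u δ w) : ℝ) = inner ℝ u w := by
  rw [Lmap_apply, inner_add_right, inner_smul_right, inner_smul_right, inner_projc u hu,
    real_inner_self_eq_norm_sq, hu]; ring

lemma decomp (u w : E) : w = (inner ℝ u w : ℝ) • u + projc u w := by
  rw [projc_apply]; abel

lemma projc_of_orth (u w : E) (h : (inner ℝ u w : ℝ) = 0) : projc u w = w := by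
  rw [projc_apply, h]; simp

lemma projc_Lmap (u : E) (hu : ‖u‖ = 1) (w : E) (δ : ℝ) :
    projc u (Lmap u δ w) = δ • projc u w := by
  rw [projc_apply, inner_Lmap u hu, Lmap_apply]; abel

lemma Lmap_Lmap (u : E) (hu : ‖u‖ = 1) (w : E) (δ : ℝ) (hδ : δ ≠ 0) :
    Lmap u δ (Lmap u δ⁻¹ w) = w := by
  rw [Lmap_apply u _ δ, inner_Lmap u hu, projc_Lmap u hu, smul_smul, mul_inv_cancel₀ hδ, one_smul]
  exact (decomp u w).symm

lemma Lmap_inj (u : E) (hu : ‖u‖ = 1) (δ : ℝ) (hδ : δ ≠ 0) : Function.Injective (Lmap u δ) := by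
  intro x y h
  have h1 := congrArg (Lmap u δ⁻¹) h
  have e : ∀ w, Lmap u δ⁻¹ (Lmap u δ w) = w := by
    intro w
    have := Lmap_Lmap u hu w δ⁻¹ (inv_ne_zero hδ)
    rwa [inv_inv] at this
  rwa [e, e] at h1

lemma Lmap_det_pos (u : E) (hu : ‖u‖ = 1) (δ : ℝ) (hδ : 0 < δ) : 0 < (Lmap u δ).det := by
  have h : Lmap u δ = δ • (1 + (((1 - δ) / δ) • innerSL ℝ u).smulRight u) := by
    ext w
    simp only [Lmap, projc]
    simp [smul_smul, smul_add, smul_sub]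
    have : δ * ((1 - δ) / δ * (inner ℝ u w : ℝ)) = inner ℝ u w - δ * inner ℝ u w := by
      field_simp
    rw [this, sub_smul]
    abel
  rw [h, det_smul', det_transv]
  have : (((1 - δ) / δ) • innerSL ℝ u) u = (1 - δ) / δ := by
    simp [hu]
  rw [this]
  have e : 1 + (1 - δ) / δ = 1 / δ := by field_simp; ring
  rw [e]; positivity

lemma Qset_compact (u : E) (a M C : ℝ) : IsCompact (Qset u a M C) := by
  refine isCompact_of_isClosed_isBounded ?_ ?_
  · have c1 : Continuous fun w : E => (inner ℝ u w : ℝ) := continuous_const.inner continuous_id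
    have c2 : Continuous fun w : E => ‖projc u w‖ := (projc u).continuous.norm
    exact (isClosed_le continuous_const c1).inter
      ((isClosed_le c1 continuous_const).inter (isClosed_le c2 continuous_const))
  · refine (Metric.isBounded_closedBall (x := (0 : E)) (r := (|a| + |M|) * ‖u‖ + C)).subset ?_
    rintro w ⟨h1, h2, h3⟩
    rw [mem_closedBall, dist_zero_right]
    have hr : |(inner ℝ u w : ℝ)| ≤ |a| + |M| := by
      rw [abs_le]
      constructor <;> linarith [neg_abs_le a, le_abs_self M, abs_nonneg a, abs_nonneg M]
    calc ‖w‖ = ‖(inner ℝ u w : ℝ) • u + projc u w‖ := by rw [← decomp]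
      _ ≤ |(inner ℝ u w : ℝ)| * ‖u‖ + ‖projc u w‖ := by
          refine (norm_add_le _ _).trans ?_
          rw [norm_smul, Real.norm_eq_abs]
      _ ≤ _ := by gcongr

lemma Lmap_image (u : E) (hu : ‖u‖ = 1) (a M C δ : ℝ) (hδ : 0 < δ) :
    Lmap u δ '' Qset u a M C = Qset u a M (C * δ) := by
  ext z
  constructor
  · rintro ⟨w, ⟨h1, h2, h3⟩, rfl⟩
    refine ⟨?_, ?_, ?_⟩
    · rwa [inner_Lmap u hu]
    · rwa [inner_Lmap u hu]
    · rw [projc_Lmap u hu, norm_smul, Real.norm_of_nonneg hδ.le, mul_comm]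
      gcongr
  · rintro ⟨h1, h2, h3⟩
    refine ⟨Lmap u δ⁻¹ z, ⟨?_, ?_, ?_⟩, Lmap_Lmap u hu z δ hδ.ne'⟩
    · rwa [inner_Lmap u hu]
    · rwa [inner_Lmap u hu]
    · rw [projc_Lmap u hu, norm_smul, Real.norm_of_nonneg (by positivity),
        inv_mul_le_iff₀ hδ, mul_comm]
      exact h3

lemma Vf_smul (v : E → E) (hv : ContDiff ℝ 1 v)
    (hhom : ∀ (c : ℝ) (x : E), v (c • x) = c ^ 2 • v x) (u : E) (huv : v u = 0) (δ : ℝ) (w : E) :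
    δ • Vf v u δ w = v (Lmap u δ w) := by
  let r : ℝ := inner ℝ u w
  have hd : ∀ s ∈ uIcc (0 : ℝ) 1, HasDerivAt (fun s : ℝ => v (r • u + (s * δ) • projc u w))
      (δ • fderiv ℝ v (r • u + (s * δ) • projc u w) (projc u w)) s := by
    intro s _
    have d0 : HasDerivAt (fun s : ℝ => r • u + (s * δ) • projc u w) (δ • projc u w) s := by
      have := (((hasDerivAt_id s).mul_const δ).smul_const (projc u w)).const_add (r • u)
      simpa using this
    have d1 := (hv.differentiable one_ne_zero (r • u + (s * δ) • projc u w)).hasFDerivAt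
    have d2 := d1.comp_hasDerivAt s d0
    have d3 : HasDerivAt (fun s : ℝ => v (r • u + (s * δ) • projc u w)) _ s := d2
    simpa only [map_smul] using d3
  have hc : Continuous fun s : ℝ => δ • fderiv ℝ v (r • u + (s * δ) • projc u w) (projc u w) := by
    have a1 : Continuous fun s : ℝ => r • u + (s * δ) • projc u w := by fun_prop
    exact (((hv.continuous_fderiv one_ne_zero).comp a1).clm_apply continuous_const).const_smul δ
  have h := intervalIntegral.integral_eq_sub_of_hasDerivAt hd (hc.intervalIntegrable _ _)
  rw [intervalIntegral.integral_smul] at h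
  have h0 : v (r • u) = 0 := by rw [hhom, huv, smul_zero]
  simp only [zero_mul, zero_smul, add_zero, one_mul, h0, sub_zero] at h
  rw [Lmap_apply]
  exact h

lemma Vf_cont (v : E → E) (hv : ContDiff ℝ 1 v) (u : E) :
    Continuous fun q : ℝ × E => Vf v u q.1 q.2 := by
  have c1 : Continuous fun w : E => (inner ℝ u w : ℝ) := continuous_const.inner continuous_id
  have c2 : Continuous fun w : E => projc u w := (projc u).continuous
  refine intervalIntegral.continuous_parametric_intervalIntegral_of_continuous'
    (f := fun (q : ℝ × E) (s : ℝ) => fderiv ℝ v ((inner ℝ u q.2 : ℝ) • u +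
      (s * q.1) • projc u q.2) (projc u q.2)) ?_ 0 1
  have a1 : Continuous fun q : (ℝ × E) × ℝ => (inner ℝ u q.1.2 : ℝ) • u +
      (q.2 * q.1.1) • projc u q.1.2 := by
    refine Continuous.add ?_ ?_
    · exact (c1.comp (continuous_snd.comp continuous_fst)).smul continuous_const
    · exact (continuous_snd.mul (continuous_fst.comp continuous_fst)).smul
        (c2.comp (continuous_snd.comp continuous_fst))
  exact ((hv.continuous_fderiv one_ne_zero).comp a1).clm_apply
    (c2.comp (continuous_snd.comp continuous_fst))

lemma Lmap_cont (u : E) : Continuous fun q : ℝ × E => Lmap u q.1 q.2 := by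
  simp_rw [Lmap_apply]
  have c1 : Continuous fun w : E => (inner ℝ u w : ℝ) := continuous_const.inner continuous_id
  exact ((c1.comp continuous_snd).smul continuous_const).add
    (continuous_fst.smul ((projc u).continuous.comp continuous_snd))

lemma Kf_cont (v : E → E) (hv : ContDiff ℝ 1 v) (u : E) :
    Continuous fun q : ℝ × E => Kf v u q.1 q.2 := (Lmap_cont u).add (Vf_cont v hv u)

lemma Mf_cont (v : E → E) (hv : ContDiff ℝ 1 v) (u : E) (a : ℝ) (ha : 0 < a) :
    Continuous fun q : ℝ × E => Mf v u a q.1 q.2 := by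
  have c1 : Continuous fun w : E => (inner ℝ u w : ℝ) := continuous_const.inner continuous_id
  have cD : Continuous fun q : ℝ × E => fderiv ℝ v (Lmap u q.1 q.2) :=
    (hv.continuous_fderiv one_ne_zero).comp (Lmap_cont u)
  have cP : Continuous fun q : ℝ × E => projc u q.2 := (projc u).continuous.comp continuous_snd
  have cinv : Continuous fun q : ℝ × E => (max (inner ℝ u q.2 : ℝ) a)⁻¹ :=
    ((c1.comp continuous_snd).max continuous_const).inv₀
      fun q => (lt_max_of_lt_right ha).ne'
  have cvec : Continuous fun q : ℝ × E => u + (max (inner ℝ u q.2 : ℝ) a)⁻¹ •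
    ((2 : ℝ) • Vf v u q.1 q.2 - fderiv ℝ v (Lmap u q.1 q.2) (projc u q.2)) :=
    continuous_const.add (cinv.smul (((Vf_cont v hv u).const_smul (2 : ℝ)).sub (cD.clm_apply cP)))
  refine Continuous.add (Continuous.add ?_ (continuous_fst.smul continuous_const))
    (cD.clm_comp continuous_const)
  exact (ContinuousLinearMap.smulRightL ℝ E E (innerSL ℝ u)).continuous.comp cvec

lemma Mf_eq (v : E → E) (hv : ContDiff ℝ 1 v)
    (hhom : ∀ (c : ℝ) (x : E), v (c • x) = c ^ 2 • v x) (u : E) (huv : v u = 0)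
    (a : ℝ) (ha : 0 < a) (δ : ℝ) (hδ : δ ≠ 0) (w : E) (hw : a ≤ (inner ℝ u w : ℝ)) :
    Mf v u a δ w = (1 + δ⁻¹ • fderiv ℝ v (Lmap u δ w)).comp (Lmap u δ) := by
  have hr : (inner ℝ u w : ℝ) ≠ 0 := (ha.trans_le hw).ne'
  have key : δ⁻¹ • fderiv ℝ v (Lmap u δ w) u = (inner ℝ u w : ℝ)⁻¹ •
      ((2 : ℝ) • Vf v u δ w - fderiv ℝ v (Lmap u δ w) (projc u w)) := by
    have h1 := euler_id v hhom hv (Lmap u δ w)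
    rw [← Vf_smul v hv hhom u huv δ w] at h1
    have h2 : fderiv ℝ v (Lmap u δ w) (Lmap u δ w) = (inner ℝ u w : ℝ) • fderiv ℝ v (Lmap u δ w) u
        + δ • fderiv ℝ v (Lmap u δ w) (projc u w) := by
      conv_lhs => rw [Lmap_apply u w δ]
      rw [map_add, map_smul, map_smul, ← Lmap_apply u w δ]
    rw [h2] at h1
    have h3 : (inner ℝ u w : ℝ) • fderiv ℝ v (Lmap u δ w) u =
        δ • ((2 : ℝ) • Vf v u δ w - fderiv ℝ v (Lmap u δ w) (projc u w)) := by
      rw [smul_sub, smul_comm δ (2 : ℝ), ← h1]; abel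
    rw [eq_inv_smul_iff₀ hr, smul_comm, h3, smul_smul, inv_mul_cancel₀ hδ, one_smul]
  ext η
  simp only [Mf, max_eq_left hw, ← key]
  simp only [add_apply, ContinuousLinearMap.smulRight_apply,
    ContinuousLinearMap.comp_apply, smul_apply, innerSL_apply_apply,
    Lmap_apply u η δ, map_add, map_smul, one_apply_eq_self, smul_add]
  have h4 : δ • δ⁻¹ • fderiv ℝ v (Lmap u δ w) (projc u η) = fderiv ℝ v (Lmap u δ w) (projc u η) := by
    rw [smul_smul, mul_inv_cancel₀ hδ, one_smul]
  rw [h4]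
  abel

lemma local_rescale (v : E → E) (hv : ContDiff ℝ 1 v)
    (hhom : ∀ (c : ℝ) (x : E), v (c • x) = c ^ 2 • v x) (u : E) (hu : ‖u‖ = 1) (huv : v u = 0)
    (a M C : ℝ) (ha : 0 < a) (δ : ℝ) (hδ : 0 < δ) (φ : E → ℝ) :
    ∫ z in Qset u a M (C * δ), φ (z + δ⁻¹ • v z) * (1 + δ⁻¹ • fderiv ℝ v z).det =
    ∫ w in Qset u a M C, φ (Kf v u δ w) * (Mf v u a δ w).det := by
  rw [← Lmap_image u hu a M C δ hδ]
  rw [integral_image_eq_integral_abs_det_fderiv_smul volume (Qset_compact u a M C).measurableSet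
    (fun x _ => (Lmap u δ).hasFDerivAt.hasFDerivWithinAt) (Lmap_inj u hu δ hδ.ne').injOn]
  refine setIntegral_congr_fun (Qset_compact u a M C).measurableSet ?_
  intro w hw
  simp only
  rw [Mf_eq v hv hhom u huv a ha δ hδ.ne' w hw.1, det_comp', abs_of_pos (Lmap_det_pos u hu δ hδ),
    Kf, ← Vf_smul v hv hhom u huv δ w, smul_smul δ⁻¹, inv_mul_cancel₀ hδ.ne', one_smul, smul_eq_mul]
  ring

lemma local_tendsto (v : E → E) (hv : ContDiff ℝ 1 v)
    (hhom : ∀ (c : ℝ) (x : E), v (c • x) = c ^ 2 • v x) (u : E) (hu : ‖u‖ = 1) (huv : v u = 0)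
    (a M C : ℝ) (ha : 0 < a) (φ : E → ℝ) (hφ : Continuous φ) :
    Tendsto (fun δ : ℝ => ∫ z in Qset u a M (C * δ), φ (z + δ⁻¹ • v z) *
      (1 + δ⁻¹ • fderiv ℝ v z).det) (𝓝[>] 0)
      (𝓝 (∫ w in Qset u a M C, φ (Kf v u 0 w) * (Mf v u a 0 w).det)) := by
  have hf : Continuous (Function.uncurry fun (δ : ℝ) (w : E) =>
      φ (Kf v u δ w) * (Mf v u a δ w).det) :=
    (hφ.comp (Kf_cont v hv u)).mul
      (ContinuousLinearMap.continuous_det.comp (Mf_cont v hv u a ha))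
  have hcont := continuous_parametric_integral_of_continuous (μ := (volume : Measure E)) hf
    (Qset_compact u a M C)
  refine ((hcont.tendsto 0).mono_left nhdsWithin_le_nhds).congr' ?_
  filter_upwards [self_mem_nhdsWithin] with δ hδ
  exact (local_rescale v hv hhom u hu huv a M C ha δ hδ φ).symm

lemma inner_range (v : E → E) (hv : ContDiff ℝ 1 v)
    (horth : ∀ x, inner ℝ (v x) x = 0) (u : E) (huv : v u = 0) (h : E) :
    (inner ℝ u (fderiv ℝ v u h) : ℝ) = 0 := by
  have d1 := (hv.differentiable one_ne_zero u).hasFDerivAt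
  have d2 := d1.inner ℝ (hasFDerivAt_id u)
  have e : (fun t => inner ℝ (v t) (id t)) = fun _ : E => (0 : ℝ) := by
    ext t; exact horth t
  rw [e] at d2
  have d3 := d2.unique (hasFDerivAt_const (0 : ℝ) u)
  have d4 := congrArg (fun L : E →L[ℝ] ℝ => L h) d3
  simp [huv] at d4
  rw [real_inner_comm]; exact d4

/-- The linear map `r u + h ↦ r u + A h`. -/
noncomputable def Smap (u : E) (A : E →L[ℝ] E) : E →L[ℝ] E :=
  (innerSL ℝ u).smulRight u + A.comp (projc u)

lemma Smap_apply (u : E) (A : E →L[ℝ] E) (w : E) :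
    Smap u A w = (inner ℝ u w : ℝ) • u + A (projc u w) := by simp [Smap]

lemma projc_eq_zero (u : E) (hu : ‖u‖ = 1) (A : E →L[ℝ] E)
    (hker : ∀ h, A h = 0 → ∃ c : ℝ, h = c • u) (w : E) (h : A (projc u w) = 0) :
    projc u w = 0 := by
  obtain ⟨c, hc⟩ := hker _ h
  have h1 := inner_projc u hu w
  rw [hc, inner_smul_right, real_inner_self_eq_norm_sq, hu] at h1
  rw [hc]
  have : c = 0 := by linarith
  rw [this, zero_smul]

lemma Smap_inj (u : E) (hu : ‖u‖ = 1) (A : E →L[ℝ] E) (hA : ∀ h, (inner ℝ u (A h) : ℝ) = 0)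
    (hker : ∀ h, A h = 0 → ∃ c : ℝ, h = c • u) : Function.Injective (Smap u A) := by
  rw [injective_iff_map_eq_zero]
  intro w hw
  rw [Smap_apply] at hw
  have h1 := congrArg (fun x => (inner ℝ u x : ℝ)) hw
  simp only [inner_add_right, inner_smul_right, hA, inner_zero_right,
    real_inner_self_eq_norm_sq, hu] at h1
  have h2 : (inner ℝ u w : ℝ) = 0 := by linarith
  rw [h2, zero_smul, zero_add] at hw
  rw [decomp u w, h2, projc_eq_zero u hu A hker w hw]
  simp

lemma lower_bound (u : E) (hu : ‖u‖ = 1) (A : E →L[ℝ] E) (hA : ∀ h, (inner ℝ u (A h) : ℝ) = 0)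
    (hker : ∀ h, A h = 0 → ∃ c : ℝ, h = c • u) :
    ∃ K : ℝ, 0 < K ∧ ∀ w, ‖projc u w‖ ≤ K * ‖A (projc u w)‖ := by
  obtain ⟨K, hK, hKl⟩ := LinearMap.exists_antilipschitzWith (Smap u A : E →ₗ[ℝ] E)
    (LinearMap.ker_eq_bot.2 (Smap_inj u hu A hA hker))
  refine ⟨K, hK, fun w => ?_⟩
  have h := hKl.le_mul_dist (projc u w) 0
  simp only [dist_zero_right, map_zero] at h
  have e : (Smap u A : E →ₗ[ℝ] E) (projc u w) = A (projc u w) := by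
    change Smap u A (projc u w) = _
    rw [Smap_apply, inner_projc u hu, zero_smul, zero_add,
      projc_of_orth u (projc u w) (inner_projc u hu w)]
  rwa [e] at h

lemma local_value (v : E → E) (hv : ContDiff ℝ 1 v)
    (hhom : ∀ (c : ℝ) (x : E), v (c • x) = c ^ 2 • v x)
    (horth : ∀ x, inner ℝ (v x) x = 0) (u : E) (hu : ‖u‖ = 1) (huv : v u = 0)
    (hker : ∀ h, fderiv ℝ v u h = 0 → ∃ c : ℝ, h = c • u) :
    ∃ σ : ℤ, (σ = 1 ∨ σ = -1) ∧ ∀ (a M C : ℝ) (φ : E → ℝ), 0 < a →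
      (∀ x, φ x ≠ 0 → 0 < (inner ℝ u x : ℝ)) →
      (∀ w, 0 < (inner ℝ u w : ℝ) → φ ((inner ℝ u w : ℝ) • u +
        (inner ℝ u w : ℝ) • fderiv ℝ v u (projc u w)) ≠ 0 → w ∈ Qset u a M C) →
      ∫ w in Qset u a M C, φ (Kf v u 0 w) * (Mf v u a 0 w).det = σ * ∫ x, φ x := by
  set A := fderiv ℝ v u with hAdef
  have hA : ∀ h, (inner ℝ u (A h) : ℝ) = 0 := inner_range v hv horth u huv
  let H : Set E := {w | 0 < (inner ℝ u w : ℝ)}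
  have c1 : Continuous fun w : E => (inner ℝ u w : ℝ) := continuous_const.inner continuous_id
  have hHo : IsOpen H := isOpen_lt continuous_const c1
  have hHc : Convex ℝ H := by
    intro x hx y hy s t hs ht hst
    change 0 < (inner ℝ u (s • x + t • y) : ℝ)
    rw [inner_add_right, inner_smul_right, inner_smul_right]
    have hx' : 0 < (inner ℝ u x : ℝ) := hx
    have hy' : 0 < (inner ℝ u y : ℝ) := hy
    rcases hs.eq_or_lt with h | h
    · have : t = 1 := by linarith
      rw [← h, this]; linarith
    · have := mul_pos h hx'
      have := mul_nonneg ht hy'.le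
      linarith
  let K0 : E → E := fun w => (inner ℝ u w : ℝ) • u + (inner ℝ u w : ℝ) • A (projc u w)
  let M0 : E → E →L[ℝ] E := fun w =>
    (innerSL ℝ u).smulRight (u + A (projc u w)) + (inner ℝ u w : ℝ) • A.comp (projc u)
  have hinK0 : ∀ w, (inner ℝ u (K0 w) : ℝ) = inner ℝ u w := by
    intro w
    simp only [K0, inner_add_right, inner_smul_right, hA, real_inner_self_eq_norm_sq, hu]
    ring
  have hder : ∀ w, HasFDerivAt K0 (M0 w) w := by
    intro w
    have d1 : HasFDerivAt (fun w : E => (inner ℝ u w : ℝ)) (innerSL ℝ u) w :=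
      (innerSL ℝ u).hasFDerivAt
    have d2 : HasFDerivAt (fun w : E => A (projc u w)) (A.comp (projc u)) w :=
      (A.comp (projc u)).hasFDerivAt
    have d3 := (d1.smul_const u).add (d1.smul d2)
    refine d3.congr_fderiv ?_
    ext η
    simp [M0]
    abel
  have hM0c : Continuous fun w => (M0 w).det := by
    refine ContinuousLinearMap.continuous_det.comp ?_
    refine Continuous.add ?_ (c1.smul continuous_const)
    exact (ContinuousLinearMap.smulRightL ℝ E E (innerSL ℝ u)).continuous.comp
      (continuous_const.add (A.comp (projc u)).continuous)
  have hM0ne : ∀ w ∈ H, (M0 w).det ≠ 0 := by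
    intro w hw
    have hw' : 0 < (inner ℝ u w : ℝ) := hw
    have hinj : Function.Injective (M0 w) := by
      rw [injective_iff_map_eq_zero]
      intro η hη
      have e : M0 w η = (inner ℝ u η : ℝ) • (u + A (projc u w)) +
        (inner ℝ u w : ℝ) • A (projc u η) := by simp [M0]
      rw [e] at hη
      have h1 := congrArg (fun x => (inner ℝ u x : ℝ)) hη
      simp only [inner_add_right, inner_smul_right, hA, inner_zero_right,
        real_inner_self_eq_norm_sq, hu] at h1
      have h2 : (inner ℝ u η : ℝ) = 0 := by linarith
      rw [h2, zero_smul, zero_add] at hη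
      have h3 : A (projc u η) = 0 := (smul_eq_zero.1 hη).resolve_left hw'.ne'
      rw [decomp u η, h2, projc_eq_zero u hu A hker η h3]
      simp
    have hu' : IsUnit (M0 w : E →ₗ[ℝ] E) := by
      rw [LinearMap.isUnit_iff_ker_eq_bot]
      exact LinearMap.ker_eq_bot.2 hinj
    exact (LinearMap.isUnit_det _ hu').ne_zero
  have hsign : ∃ σ : ℤ, (σ = 1 ∨ σ = -1) ∧ ∀ w ∈ H, (M0 w).det = σ * |(M0 w).det| := by
    have := hHc.isPreconnected.eq_or_eq_neg_of_sq_eq (f := fun w => (M0 w).det)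
      (g := fun w => |(M0 w).det|) hM0c.continuousOn hM0c.abs.continuousOn
      (fun w _ => by simp) (fun {w} hw => abs_ne_zero.2 (hM0ne w hw))
    rcases this with h | h
    · exact ⟨1, Or.inl rfl, fun w hw => by simpa using h hw⟩
    · exact ⟨-1, Or.inr rfl, fun w hw => by simpa using h hw⟩
  obtain ⟨σ, hσ, hσd⟩ := hsign
  refine ⟨σ, hσ, ?_⟩
  intro a M C φ ha hφ hQ
  have hQH : Qset u a M C ⊆ H := fun w hw => ha.trans_le hw.1
  have s1 : ∫ w in Qset u a M C, φ (Kf v u 0 w) * (Mf v u a 0 w).det =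
      ∫ w in Qset u a M C, φ (K0 w) * (M0 w).det := by
    refine setIntegral_congr_fun (Qset_compact u a M C).measurableSet ?_
    intro w hw
    have hr : (inner ℝ u w : ℝ) ≠ 0 := (ha.trans_le hw.1).ne'
    have hL : Lmap u 0 w = (inner ℝ u w : ℝ) • u := by rw [Lmap_apply]; simp
    have hV : Vf v u 0 w = (inner ℝ u w : ℝ) • A (projc u w) := by
      simp [Vf, fderiv_hom v hhom hv _ hr, ← hAdef]
    have hK : Kf v u 0 w = K0 w := by rw [Kf, hL, hV]
    have hM : Mf v u a 0 w = M0 w := by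
      ext η
      simp only [Mf, hL, hV, max_eq_left hw.1, fderiv_hom v hhom hv _ hr, ← hAdef, M0]
      have : (inner ℝ u w : ℝ)⁻¹ • ((2 : ℝ) • (inner ℝ u w : ℝ) • A (projc u w) -
          ((inner ℝ u w : ℝ) • A) (projc u w)) = A (projc u w) := by
        rw [smul_apply, two_smul, add_sub_cancel_right, smul_smul, inv_mul_cancel₀ hr, one_smul]
      rw [this]
      simp
    simp only [hK, hM]
  have s2 : ∫ w in Qset u a M C, φ (K0 w) * (M0 w).det = ∫ w in H, φ (K0 w) * (M0 w).det := by
    refine (setIntegral_eq_of_subset_of_forall_sdiff_eq_zero hHo.measurableSet hQH ?_).symm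
    intro w hw
    by_contra hne
    exact hw.2 (hQ w hw.1 (left_ne_zero_of_mul hne))
  have hinj : InjOn K0 H := by
    intro x hx y hy hxy
    have hx' : 0 < (inner ℝ u x : ℝ) := hx
    have h1 : (inner ℝ u x : ℝ) = inner ℝ u y := by rw [← hinK0 x, ← hinK0 y, hxy]
    have h2 : K0 x = K0 y := hxy
    simp only [K0, ← h1] at h2
    have h3 := smul_right_injective E hx'.ne' (add_left_cancel h2)
    apply Smap_inj u hu A hA hker
    rw [Smap_apply, Smap_apply, h1]
    rw [h3]
  have himg : K0 '' H = H := by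
    ext y
    constructor
    · rintro ⟨x, hx, rfl⟩
      change 0 < (inner ℝ u (K0 x) : ℝ)
      rw [hinK0]; exact hx
    · intro hy
      have hy' : 0 < (inner ℝ u y : ℝ) := hy
      have hsurj : Function.Surjective (Smap u A : E →ₗ[ℝ] E) :=
        LinearMap.injective_iff_surjective.1 (Smap_inj u hu A hA hker)
      obtain ⟨w, hw⟩ := hsurj ((inner ℝ u y : ℝ) • u + (inner ℝ u y : ℝ)⁻¹ • projc u y)
      have hw' : (inner ℝ u w : ℝ) • u + A (projc u w) =
        (inner ℝ u y : ℝ) • u + (inner ℝ u y : ℝ)⁻¹ • projc u y := by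
        rw [← Smap_apply]; exact hw
      have h1 := congrArg (fun x => (inner ℝ u x : ℝ)) hw'
      simp only [inner_add_right, inner_smul_right, hA, inner_projc u hu,
        real_inner_self_eq_norm_sq, hu] at h1
      have h2 : (inner ℝ u w : ℝ) = inner ℝ u y := by linarith
      refine ⟨w, ?_, ?_⟩
      · change 0 < (inner ℝ u w : ℝ); rw [h2]; exact hy'
      · rw [h2] at hw'
        have h3 := add_left_cancel hw'
        simp only [K0]
        rw [h3, h2, smul_smul, mul_inv_cancel₀ hy'.ne', one_smul]
        exact (decomp u y).symm
  have s3 : ∫ w in H, φ (K0 w) * (M0 w).det = σ * ∫ w in H, |(M0 w).det| • φ (K0 w) := by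
    rw [← integral_const_mul]
    refine setIntegral_congr_fun hHo.measurableSet ?_
    intro w hw
    simp only
    rw [hσd w hw, abs_mul, abs_abs]
    have : |(σ : ℝ)| = 1 := by rcases hσ with h | h <;> simp [h]
    rw [this, smul_eq_mul]; ring
  rw [s1, s2, s3, ← integral_image_eq_integral_abs_det_fderiv_smul volume hHo.measurableSet
    (fun x _ => (hder x).hasFDerivWithinAt) hinj, himg,
    setIntegral_eq_integral_of_forall_compl_eq_zero]
  intro x hx
  by_contra hne
  exact hx (hφ x hne)

lemma local_est (v : E → E) (hv : ContDiff ℝ 1 v)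
    (hhom : ∀ (c : ℝ) (x : E), v (c • x) = c ^ 2 • v x)
    (horth : ∀ x, inner ℝ (v x) x = 0) (u : E) (hu : ‖u‖ = 1) (huv : v u = 0)
    (hker : ∀ h, fderiv ℝ v u h = 0 → ∃ c : ℝ, h = c • u) :
    ∃ K : ℝ, 0 < K ∧ ∀ᶠ ζ in 𝓝 u, ‖projc u ζ‖ ≤ K * ‖v ζ‖ := by
  obtain ⟨K, hK, hKl⟩ := lower_bound u hu (fderiv ℝ v u)
    (inner_range v hv horth u huv) hker
  refine ⟨2 * K, by positivity, ?_⟩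
  have hs : HasStrictFDerivAt v (fderiv ℝ v u) u :=
    hv.contDiffAt.hasStrictFDerivAt one_ne_zero
  have hl := hs.isLittleO
  have c1 : Continuous fun w : E => (w, (inner ℝ u w : ℝ) • u) := by fun_prop
  have t1 : Tendsto (fun w : E => (w, (inner ℝ u w : ℝ) • u)) (𝓝 u) (𝓝 (u, u)) := by
    have := c1.tendsto u
    simpa [real_inner_self_eq_norm_sq, hu] using this
  have h1 := (hl.comp_tendsto t1).def (show (0 : ℝ) < 1 / (2 * K) by positivity)
  filter_upwards [h1] with ζ hζ
  simp only [Function.comp] at hζ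
  rw [hhom, huv, smul_zero, sub_zero, ← projc_apply] at hζ
  have h2 := hKl ζ
  have h3 : ‖fderiv ℝ v u (projc u ζ)‖ ≤ ‖v ζ‖ + 1 / (2 * K) * ‖projc u ζ‖ := by
    calc _ = ‖v ζ - (v ζ - fderiv ℝ v u (projc u ζ))‖ := by congr 1; abel
      _ ≤ _ := (norm_sub_le _ _).trans (by gcongr)
  have h4 : ‖projc u ζ‖ ≤ K * (‖v ζ‖ + 1 / (2 * K) * ‖projc u ζ‖) :=
    h2.trans (by gcongr)
  have h5 : K * (‖v ζ‖ + 1 / (2 * K) * ‖projc u ζ‖) = K * ‖v ζ‖ + ‖projc u ζ‖ / 2 := by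
    field_simp
  linarith

lemma Qset_mono (u : E) (a M C C' : ℝ) (h : C ≤ C') : Qset u a M C ⊆ Qset u a M C' :=
  fun _ hw => ⟨hw.1, hw.2.1, hw.2.2.trans h⟩

lemma support_lemma {ι : Type*} (v : E → E) (hv : ContDiff ℝ 1 v)
    (hhom : ∀ (c : ℝ) (x : E), v (c • x) = c ^ 2 • v x)
    (horth : ∀ x, inner ℝ (v x) x = 0) (u : ι → E) (hu : ∀ i, ‖u i‖ = 1)
    (huv : ∀ i, v (u i) = 0)
    (hzero : ∀ x, x ≠ 0 → v x = 0 → ∃ i, ∃ c : ℝ, x = c • u i)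
    (hker : ∀ i h, fderiv ℝ v (u i) h = 0 → ∃ c : ℝ, h = c • u i)
    (a Mx : ℝ) (ha : 0 < a) (hM : 0 ≤ Mx) :
    ∃ R C : ℝ, 0 ≤ R ∧ 0 ≤ C ∧ ∀ ε : ℝ, 0 < ε → ∀ z : E,
      ‖z + (ε ^ 2)⁻¹ • v z‖ ≤ Mx → (∀ i, 4 * a ≤ (inner ℝ (u i) (z + (ε ^ 2)⁻¹ • v z) : ℝ)) →
      ‖z‖ ≤ ε * R ∨ ∃ i, z ∈ Qset (u i) a Mx (C * ε ^ 2) := by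
  have key : ∃ R C : ℝ, 0 ≤ R ∧ 0 ≤ C ∧ ∀ ε : ℝ, 0 < ε → ∀ z : E, z ≠ 0 →
      ‖z‖⁻¹ • z ∈ sphere (0 : E) 1 →
      ‖z + (ε ^ 2)⁻¹ • v z‖ ≤ Mx → (∀ i, 4 * a ≤ (inner ℝ (u i) (z + (ε ^ 2)⁻¹ • v z) : ℝ)) →
      ‖z‖ ≤ ε * R ∨ ∃ i, z ∈ Qset (u i) a Mx (C * ε ^ 2) := by
    refine (isCompact_sphere (0 : E) 1).induction_on (p := fun S => ∃ R C : ℝ, 0 ≤ R ∧ 0 ≤ C ∧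
      ∀ ε : ℝ, 0 < ε → ∀ z : E, z ≠ 0 → ‖z‖⁻¹ • z ∈ S →
      ‖z + (ε ^ 2)⁻¹ • v z‖ ≤ Mx → (∀ i, 4 * a ≤ (inner ℝ (u i) (z + (ε ^ 2)⁻¹ • v z) : ℝ)) →
      ‖z‖ ≤ ε * R ∨ ∃ i, z ∈ Qset (u i) a Mx (C * ε ^ 2)) ?_ ?_ ?_ ?_
    · exact ⟨0, 0, le_rfl, le_rfl, fun _ _ _ _ h => absurd h (by simp)⟩
    · rintro s t hst ⟨R, C, h1, h2, h3⟩
      exact ⟨R, C, h1, h2, fun ε hε z hz hzs => h3 ε hε z hz (hst hzs)⟩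
    · rintro s t ⟨R, C, h1, h2, h3⟩ ⟨R', C', h1', h2', h3'⟩
      refine ⟨max R R', max C C', le_max_of_le_left h1, le_max_of_le_left h2, ?_⟩
      rintro ε hε z hz (hzs | hzs) hn hi
      · rcases h3 ε hε z hz hzs hn hi with h | ⟨i, h⟩
        · exact Or.inl (h.trans (by gcongr; exact le_max_left _ _))
        · exact Or.inr ⟨i, Qset_mono _ _ _ _ _ (by gcongr; exact le_max_left _ _) h⟩
      · rcases h3' ε hε z hz hzs hn hi with h | ⟨i, h⟩
        · exact Or.inl (h.trans (by gcongr; exact le_max_right _ _))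
        · exact Or.inr ⟨i, Qset_mono _ _ _ _ _ (by gcongr; exact le_max_right _ _) h⟩
    · intro ζ₀ hζ₀
      have hζn : ‖ζ₀‖ = 1 := by simpa using hζ₀
      -- common facts
      have hcom : ∀ ε : ℝ, 0 < ε → ∀ z : E, z ≠ 0 → ‖z + (ε ^ 2)⁻¹ • v z‖ ≤ Mx →
          ‖z‖ ≤ Mx ∧ ‖v z‖ ≤ 2 * Mx * ε ^ 2 ∧ ‖v (‖z‖⁻¹ • z)‖ * ‖z‖ ^ 2 = ‖v z‖ ∧
          ‖z‖ = inner ℝ (z + (ε ^ 2)⁻¹ • v z) (‖z‖⁻¹ • z) := by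
        intro ε hε z hz hn
        have hzp : 0 < ‖z‖ := norm_pos_iff.2 hz
        have h1 : ‖z‖ ≤ Mx := (norm_le_of_orth v horth _ z).trans hn
        refine ⟨h1, ?_, ?_, ?_⟩
        · have h2 : ‖(ε ^ 2)⁻¹ • v z‖ ≤ 2 * Mx := by
            calc _ = ‖(z + (ε ^ 2)⁻¹ • v z) - z‖ := by congr 1; abel
              _ ≤ _ := (norm_sub_le _ _).trans (by linarith)
          rw [norm_smul, norm_inv, Real.norm_of_nonneg (by positivity)] at h2
          rwa [inv_mul_le_iff₀ (by positivity), mul_comm] at h2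
        · rw [hhom, norm_smul, norm_pow, norm_inv, norm_norm]
          field_simp
        · rw [inner_smul_right, inner_add_left, inner_smul_left, horth,
            real_inner_self_eq_norm_sq]
          field_simp
          simp
      have hvc : Continuous v := hv.continuous
      by_cases hz0 : v ζ₀ = 0
      · obtain ⟨i, c, hc⟩ := hzero ζ₀ (by rintro rfl; simp at hζn) hz0
        have hcabs : |c| = 1 := by
          rw [hc, norm_smul, hu, mul_one] at hζn; exact hζn
        rcases (abs_eq zero_le_one).1 hcabs with h | h
        · rw [h, one_smul] at hc
          subst hc
          obtain ⟨K, hK, hKe⟩ := local_est v hv hhom horth (u i) (hu i) (huv i) (hker i)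
          have e1 : ∀ᶠ ζ in 𝓝 (u i), (1 / 2 : ℝ) < inner ℝ (u i) ζ := by
            have cc : Continuous fun ζ : E => (inner ℝ (u i) ζ : ℝ) := by fun_prop
            refine cc.continuousAt.eventually (lt_mem_nhds ?_)
            change (1 / 2 : ℝ) < inner ℝ (u i) (u i)
            rw [real_inner_self_eq_norm_sq, hu]; norm_num
          have e2 : ∀ᶠ ζ in 𝓝 (u i), Mx * ‖ζ - u i‖ < 2 * a := by
            have cc : Continuous fun ζ : E => Mx * ‖ζ - u i‖ := by fun_prop
            refine cc.continuousAt.eventually (gt_mem_nhds ?_)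
            simp; exact ha
          refine ⟨_, mem_nhdsWithin_of_mem_nhds (hKe.and (e1.and e2)), 0, K * Mx / a, le_rfl,
            by positivity, ?_⟩
          rintro ε hε z hz ⟨h1, h2, h3⟩ hn hi
          right
          obtain ⟨g1, g2, g3, g4⟩ := hcom ε hε z hz hn
          have hzp : 0 < ‖z‖ := norm_pos_iff.2 hz
          have g5 : 2 * a ≤ ‖z‖ := by
            have : (inner ℝ (z + (ε ^ 2)⁻¹ • v z) (‖z‖⁻¹ • z) : ℝ) =
              inner ℝ (u i) (z + (ε ^ 2)⁻¹ • v z) +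
                inner ℝ (z + (ε ^ 2)⁻¹ • v z) (‖z‖⁻¹ • z - u i) := by
              rw [inner_sub_right, real_inner_comm (u i)]; ring
            rw [this] at g4
            have h5 := abs_le.1 (abs_real_inner_le_norm (z + (ε ^ 2)⁻¹ • v z) (‖z‖⁻¹ • z - u i))
            have h6 : ‖z + (ε ^ 2)⁻¹ • v z‖ * ‖‖z‖⁻¹ • z - u i‖ ≤ Mx * ‖‖z‖⁻¹ • z - u i‖ := by
              gcongr
            have := hi i
            linarith [h5.1]
          refine ⟨i, ?_, ?_, ?_⟩
          · rw [inner_smul_right, ← div_eq_inv_mul, lt_div_iff₀ hzp] at h2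
            linarith
          · have := real_inner_le_norm (u i) z
            rw [hu, one_mul] at this
            linarith
          · rw [map_smul, norm_smul, norm_inv, norm_norm, ← div_eq_inv_mul,
              div_le_iff₀ hzp] at h1
            have h7 : ‖projc (u i) z‖ * ‖z‖ ≤ K * ‖v z‖ := by
              rw [← g3]
              calc _ ≤ K * ‖v (‖z‖⁻¹ • z)‖ * ‖z‖ * ‖z‖ := by gcongr
                _ = _ := by ring
            have h8 : ‖projc (u i) z‖ * (2 * a) ≤ K * (2 * Mx * ε ^ 2) :=
              (mul_le_mul_of_nonneg_left g5 (norm_nonneg _)).trans (h7.trans (by gcongr))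
            have h9 : K * Mx / a * ε ^ 2 = K * (2 * Mx * ε ^ 2) / (2 * a) := by
              field_simp
            rw [h9, le_div_iff₀ (by positivity)]
            exact h8
        · have e2 : ∀ᶠ ζ in 𝓝 ζ₀, Mx * ‖ζ - ζ₀‖ < 4 * a := by
            have cc : Continuous fun ζ : E => Mx * ‖ζ - ζ₀‖ := by fun_prop
            refine cc.continuousAt.eventually (gt_mem_nhds ?_)
            simp; exact ha
          refine ⟨_, mem_nhdsWithin_of_mem_nhds e2, 0, 0, le_rfl, le_rfl, ?_⟩
          intro ε hε z hz h3 hn hi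
          exfalso
          obtain ⟨g1, g2, g3, g4⟩ := hcom ε hε z hz hn
          have hzp : 0 < ‖z‖ := norm_pos_iff.2 hz
          have : (inner ℝ (z + (ε ^ 2)⁻¹ • v z) (‖z‖⁻¹ • z) : ℝ) =
              - inner ℝ (u i) (z + (ε ^ 2)⁻¹ • v z) +
                inner ℝ (z + (ε ^ 2)⁻¹ • v z) (‖z‖⁻¹ • z - ζ₀) := by
            rw [inner_sub_right, hc, h, inner_smul_right, inner_smul_right,
              real_inner_comm (u i)]; ring
          rw [this] at g4
          have h5 := abs_le.1 (abs_real_inner_le_norm (z + (ε ^ 2)⁻¹ • v z) (‖z‖⁻¹ • z - ζ₀))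
          have h6 : ‖z + (ε ^ 2)⁻¹ • v z‖ * ‖‖z‖⁻¹ • z - ζ₀‖ ≤ Mx * ‖‖z‖⁻¹ • z - ζ₀‖ := by
            gcongr
          have h3' : Mx * ‖‖z‖⁻¹ • z - ζ₀‖ < 4 * a := h3
          have := hi i
          linarith [h5.2]
      · have hp : 0 < ‖v ζ₀‖ := norm_pos_iff.2 hz0
        have e1 : ∀ᶠ ζ in 𝓝 ζ₀, ‖v ζ₀‖ / 2 < ‖v ζ‖ :=
          hvc.norm.continuousAt.eventually (lt_mem_nhds (by linarith))
        refine ⟨_, mem_nhdsWithin_of_mem_nhds e1, √(2 * Mx / (‖v ζ₀‖ / 2)), 0,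
          Real.sqrt_nonneg _, le_rfl, ?_⟩
        intro ε hε z hz h3 hn hi
        left
        obtain ⟨g1, g2, g3, g4⟩ := hcom ε hε z hz hn
        have h3' : ‖v ζ₀‖ / 2 < ‖v (‖z‖⁻¹ • z)‖ := h3
        apply le_of_sq_le_sq _ (by positivity)
        rw [mul_pow, Real.sq_sqrt (by positivity)]
        have h4 : ‖v ζ₀‖ / 2 * ‖z‖ ^ 2 ≤ 2 * Mx * ε ^ 2 := by
          refine le_trans ?_ g2
          rw [← g3]; gcongr
        rw [← mul_div_assoc, le_div_iff₀ (by positivity)]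
        linarith
  obtain ⟨R, C, hR, hC, h⟩ := key
  refine ⟨R, C, hR, hC, fun ε hε z hn hi => ?_⟩
  rcases eq_or_ne z 0 with rfl | hz
  · left; simp; positivity
  · exact h ε hε z hz (by simp [norm_smul, norm_ne_zero_iff.2 hz]) hn hi

lemma Qset_disjoint (u w : E) (hu : ‖u‖ = 1) (a M C : ℝ)
    (h : C * (1 + ‖projc w‖) < a * ‖projc w u‖) :
    Disjoint (Qset u a M C) (Qset w a M C) := by
  rw [Set.disjoint_left]
  intro z hz1 hz2
  have h1 : projc w z = (inner ℝ u z : ℝ) • projc w u + projc w (projc u z) := by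
    conv_lhs => rw [decomp u z]
    rw [map_add, map_smul]
  have h2 : (inner ℝ u z : ℝ) • projc w u = projc w z - projc w (projc u z) := by
    rw [h1]; abel
  have h3 : ‖(inner ℝ u z : ℝ) • projc w u‖ ≤ C + ‖projc w‖ * C := by
    rw [h2]
    refine (norm_sub_le _ _).trans (add_le_add hz2.2.2 ?_)
    exact ((projc w).le_opNorm _).trans (by gcongr; exact hz1.2.2)
  have h4 : a * ‖projc w u‖ ≤ ‖(inner ℝ u z : ℝ) • projc w u‖ := by
    rw [norm_smul]
    gcongr
    exact hz1.1.trans (le_abs_self _)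
  linarith

lemma main_abs {ι : Type*} [Fintype ι] (hp : Odd (Module.finrank ℝ E))
    (v : E → E) (hv : ContDiff ℝ 1 v)
    (hhom : ∀ (c : ℝ) (x : E), v (c • x) = c ^ 2 • v x)
    (horth : ∀ x, inner ℝ (v x) x = 0) (u : ι → E) (hu : ∀ i, ‖u i‖ = 1)
    (huv : ∀ i, v (u i) = 0)
    (hzero : ∀ x, x ≠ 0 → v x = 0 → ∃ i, ∃ c : ℝ, x = c • u i)
    (hdist : ∀ i j, ∀ c : ℝ, u i = c • u j → i = j)
    (hker : ∀ i h, fderiv ℝ v (u i) h = 0 → ∃ c : ℝ, h = c • u i)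
    (y : E) (hy : ∀ i, 0 < (inner ℝ (u i) y : ℝ)) : Odd (Fintype.card ι) := by
  classical
  have hnt : Nontrivial E := Module.nontrivial_of_finrank_pos (R := ℝ) hp.pos
  obtain ⟨a, ha5, ha⟩ : ∃ a : ℝ, (∀ i, 5 * a < (inner ℝ (u i) y : ℝ)) ∧ 0 < a := by
    have h1 : ∀ᶠ a : ℝ in 𝓝[>] 0, ∀ i, 5 * a < (inner ℝ (u i) y : ℝ) := by
      rw [eventually_all]
      intro i
      refine Filter.Eventually.filter_mono nhdsWithin_le_nhds ?_
      have cc : Continuous fun a : ℝ => 5 * a := by fun_prop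
      refine cc.continuousAt.eventually (gt_mem_nhds ?_)
      simpa using hy i
    exact (h1.and self_mem_nhdsWithin).exists
  let φ : ContDiffBump y := ⟨a / 2, a, by positivity, by linarith⟩
  have hφn : ∀ x, φ x ≠ 0 → ‖x - y‖ < a := by
    intro x hx
    have : x ∈ Function.support φ := hx
    rw [φ.support_eq] at this
    simpa [dist_eq_norm] using this
  set Mx := ‖y‖ + a with hMx
  have hMx0 : 0 ≤ Mx := by positivity
  have hφM : ∀ x, φ x ≠ 0 → ‖x‖ ≤ Mx := by
    intro x hx
    have h1 := hφn x hx
    calc ‖x‖ = ‖y + (x - y)‖ := by congr 1; abel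
      _ ≤ _ := (norm_add_le _ _).trans (by linarith)
  have hφi : ∀ x, φ x ≠ 0 → ∀ i, 4 * a ≤ (inner ℝ (u i) x : ℝ) := by
    intro x hx i
    have h1 := hφn x hx
    have h2 : (inner ℝ (u i) x : ℝ) = inner ℝ (u i) y + inner ℝ (u i) (x - y) := by
      rw [inner_sub_right]; ring
    have h3 := abs_le.1 (abs_real_inner_le_norm (u i) (x - y))
    rw [hu, one_mul] at h3
    linarith [ha5 i, h3.1]
  obtain ⟨R, C0, hR, hC0, hsupp⟩ := support_lemma v hv hhom horth u hu huv hzero hker a Mx ha hMx0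
  have hlb := fun i => lower_bound (u i) (hu i) (fderiv ℝ v (u i))
    (inner_range v hv horth (u i) (huv i)) (hker i)
  choose K hK hKl using hlb
  obtain ⟨C, hCC0, hCK⟩ : ∃ C, C0 ≤ C ∧ ∀ i, K i * (2 * Mx / a) ≤ C := by
    refine ⟨C0 + ∑ i, K i * (2 * Mx / a), ?_, fun i => ?_⟩
    · have : 0 ≤ ∑ i, K i * (2 * Mx / a) :=
        Finset.sum_nonneg fun i _ => mul_nonneg (hK i).le (by positivity)
      linarith
    · have : K i * (2 * Mx / a) ≤ ∑ i, K i * (2 * Mx / a) :=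
        Finset.single_le_sum (f := fun i => K i * (2 * Mx / a))
          (fun i _ => mul_nonneg (hK i).le (by positivity)) (Finset.mem_univ i)
      linarith
  have hlv := fun i => local_value v hv hhom horth (u i) (hu i) (huv i) (hker i)
  choose σ hσ hσv using hlv
  have hval : ∀ i, ∫ w in Qset (u i) a Mx C, φ (Kf v (u i) 0 w) * (Mf v (u i) a 0 w).det
      = σ i * ∫ x, φ x := by
    intro i
    refine hσv i a Mx C φ ha (fun x hx => ?_) (fun w hw hφw => ?_)
    · linarith [hφi x hx i]
    · set r : ℝ := inner ℝ (u i) w with hr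
      set A := fderiv ℝ v (u i)
      have hA : (inner ℝ (u i) (A (projc (u i) w)) : ℝ) = 0 :=
        inner_range v hv horth (u i) (huv i) _
      have h1 := hφi _ hφw i
      have h2 := hφM _ hφw
      have h3 : (inner ℝ (u i) (r • u i + r • A (projc (u i) w)) : ℝ) = r := by
        rw [inner_add_right, inner_smul_right, inner_smul_right, hA, real_inner_self_eq_norm_sq, hu]
        ring
      have h4 := real_inner_le_norm (u i) (r • u i + r • A (projc (u i) w))
      rw [h3] at h1 h4
      rw [hu, one_mul] at h4
      refine ⟨by linarith, by linarith, ?_⟩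
      have h5 : ‖r • A (projc (u i) w)‖ ≤ 2 * Mx := by
        calc _ = ‖(r • u i + r • A (projc (u i) w)) - r • u i‖ := by congr 1; abel
          _ ≤ ‖r • u i + r • A (projc (u i) w)‖ + ‖r • u i‖ := norm_sub_le _ _
          _ ≤ _ := by
            rw [norm_smul r (u i), hu, Real.norm_of_nonneg hw.le]; linarith
      rw [norm_smul, Real.norm_of_nonneg hw.le] at h5
      have h6 : ‖A (projc (u i) w)‖ ≤ 2 * Mx / a := by
        rw [le_div_iff₀ ha]
        nlinarith [norm_nonneg (A (projc (u i) w))]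
      exact (hKl i w).trans ((mul_le_mul_of_nonneg_left h6 (hK i).le).trans (hCK i))
  let F : ℝ → E → ℝ := fun ε z => φ (z + (ε ^ 2)⁻¹ • v z) * (1 + (ε ^ 2)⁻¹ • fderiv ℝ v z).det
  have hFc : ∀ ε, Continuous (F ε) := by
    intro ε
    have c1 : Continuous (fun z => fderiv ℝ v z) := hv.continuous_fderiv one_ne_zero
    have c2 : Continuous fun z => (1 + (ε ^ 2)⁻¹ • fderiv ℝ v z).det :=
      ContinuousLinearMap.continuous_det.comp (by fun_prop)
    have c3 := hv.continuous
    exact (φ.continuous.comp (by fun_prop)).mul c2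
  let S : ℝ → Option ι → Set E := fun ε o => o.elim (closedBall 0 (ε * R))
    (fun i => Qset (u i) a Mx (C * ε ^ 2))
  have hScomp : ∀ ε o, IsCompact (S ε o) := by
    rintro ε (_ | i)
    · exact isCompact_closedBall _ _
    · exact Qset_compact _ _ _ _
  have hT : ∀ ε, ∫ z, F ε z = ∫ x, φ x := fun ε =>
    total_integral v hv horth ((ε ^ 2)⁻¹) φ φ.contDiff φ.hasCompactSupport
  have hdisj : ∀ᶠ ε in 𝓝[>] (0 : ℝ), Pairwise (Function.onFun Disjoint (S ε)) := by
    have e1 : ∀ᶠ ε in 𝓝[>] (0 : ℝ), ε * R < a := by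
      refine Filter.Eventually.filter_mono nhdsWithin_le_nhds ?_
      have cc : Continuous fun ε : ℝ => ε * R := by fun_prop
      refine cc.continuousAt.eventually (gt_mem_nhds ?_)
      simpa using ha
    have e2 : ∀ᶠ ε in 𝓝[>] (0 : ℝ), ∀ i j, i ≠ j →
        C * ε ^ 2 * (1 + ‖projc (u j)‖) < a * ‖projc (u j) (u i)‖ := by
      rw [eventually_all]; intro i
      rw [eventually_all]; intro j
      by_cases hij : i = j
      · simp [hij]
      have hpos : 0 < ‖projc (u j) (u i)‖ := by
        rw [norm_pos_iff]
        intro h0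
        apply hij
        refine hdist i j (inner ℝ (u j) (u i)) ?_
        conv_lhs => rw [decomp (u j) (u i), h0, add_zero]
      refine Filter.Eventually.filter_mono nhdsWithin_le_nhds ?_
      have cc : Continuous fun ε : ℝ => C * ε ^ 2 * (1 + ‖projc (u j)‖) := by fun_prop
      refine (cc.continuousAt.eventually (gt_mem_nhds ?_)).mono fun ε h _ => h
      simpa using mul_pos ha hpos
    filter_upwards [e1, e2] with ε h1 h2
    have hbq : ∀ i, Disjoint (closedBall (0 : E) (ε * R)) (Qset (u i) a Mx (C * ε ^ 2)) := by
      intro i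
      rw [Set.disjoint_left]
      intro z hz1 hz2
      have h3 := real_inner_le_norm (u i) z
      rw [hu, one_mul] at h3
      have h4 : ‖z‖ ≤ ε * R := by simpa using hz1
      linarith [hz2.1]
    rintro (_ | i) (_ | j) hne
    · exact absurd rfl hne
    · exact hbq j
    · exact (hbq i).symm
    · exact Qset_disjoint _ _ (hu i) _ _ _ (h2 i j fun h => hne (by rw [h]))
  have hsplit : ∀ᶠ ε in 𝓝[>] (0 : ℝ), ∫ x, φ x =
      (∫ z in closedBall 0 (ε * R), F ε z) + ∑ i, ∫ z in Qset (u i) a Mx (C * ε ^ 2), F ε z := by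
    filter_upwards [hdisj, self_mem_nhdsWithin] with ε hd hε
    have hε' : 0 < ε := hε
    rw [← hT ε]
    have h1 := integral_iUnion_fintype (μ := volume) (f := F ε)
      (fun o => (hScomp ε o).measurableSet) hd
      (fun o => (hFc ε).continuousOn.integrableOn_compact (hScomp ε o))
    rw [Fintype.sum_option] at h1
    rw [← setIntegral_eq_integral_of_forall_compl_eq_zero (s := ⋃ o, S ε o)]
    · exact h1
    · intro z hz
      by_contra hne
      have h2 : φ (z + (ε ^ 2)⁻¹ • v z) ≠ 0 := left_ne_zero_of_mul hne
      apply hz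
      rw [mem_iUnion]
      rcases hsupp ε hε' z (hφM _ h2) (hφi _ h2) with h | ⟨i, h⟩
      · exact ⟨none, by simpa [S] using h⟩
      · exact ⟨some i, Qset_mono _ _ _ _ _ (by gcongr) h⟩
  have ht2 : Tendsto (fun ε : ℝ => ε ^ 2) (𝓝[>] 0) (𝓝[>] 0) := by
    rw [tendsto_nhdsWithin_iff]
    constructor
    · have cc : Continuous fun ε : ℝ => ε ^ 2 := by fun_prop
      have := cc.tendsto 0
      simp only [ne_eq, OfNat.ofNat_ne_zero, not_false_eq_true, zero_pow] at this
      exact this.mono_left nhdsWithin_le_nhds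
    · filter_upwards [self_mem_nhdsWithin] with ε hε
      exact pow_pos (show (0 : ℝ) < ε from hε) 2
  have hlim : Tendsto (fun ε : ℝ => (∫ z in closedBall 0 (ε * R), F ε z) +
      ∑ i, ∫ z in Qset (u i) a Mx (C * ε ^ 2), F ε z) (𝓝[>] 0)
      (𝓝 (0 + ∑ i, σ i * ∫ x, φ x)) := by
    refine (bounded_part hp v hv hhom φ φ.continuous R hR).add (tendsto_finsetSum _ fun i _ => ?_)
    rw [← hval i]
    exact (local_tendsto v hv hhom (u i) (hu i) (huv i) a Mx C ha φ φ.continuous).comp ht2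
  have heq := tendsto_nhds_unique (hlim.congr' (hsplit.mono fun ε h => h.symm)) tendsto_const_nhds
  have hpos : 0 < ∫ x, φ x := φ.integral_pos
  rw [zero_add, ← Finset.sum_mul] at heq
  have hs : (∑ i, (σ i : ℝ)) = 1 := by
    apply mul_right_cancel₀ hpos.ne'
    rw [heq, one_mul]
  have hs' : ∑ i, σ i = 1 := by exact_mod_cast hs
  have hodd : ∀ i, Odd (σ i) := by
    intro i; rcases hσ i with h | h <;> rw [h] <;> decide
  have h5 : Odd (∑ i, σ i) := by rw [hs']; decide
  have h6 := (Finset.odd_sum_iff_odd_card_odd (s := Finset.univ) (f := fun i => (σ i).natAbs)).1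
    (by
      rw [← Int.odd_coe_nat, Nat.cast_sum]
      rw [← Int.not_even_iff_odd] at h5 ⊢
      contrapose! h5
      have : Even (∑ i, ((σ i).natAbs : ℤ) - ∑ i, σ i) := by
        rw [← Finset.sum_sub_distrib]
        apply Finset.even_sum
        intro i _
        rcases hσ i with h | h <;> rw [h] <;> decide
      have := h5.sub this
      simpa using this)
  have h7 : (Finset.univ.filter fun i => Odd (σ i).natAbs) = Finset.univ := by
    ext i; simpa using Int.natAbs_odd.2 (hodd i)
  rwa [h7, Finset.card_univ] at h6

lemma main_abs2 {ι : Type*} [Fintype ι] (hp : Odd (Module.finrank ℝ E))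
    (v : E → E) (hv : ContDiff ℝ 1 v)
    (hhom : ∀ (c : ℝ) (x : E), v (c • x) = c ^ 2 • v x)
    (horth : ∀ x, inner ℝ (v x) x = 0) (u : ι → E) (hu : ∀ i, u i ≠ 0)
    (huv : ∀ i, v (u i) = 0)
    (hzero : ∀ x, x ≠ 0 → v x = 0 → ∃ i, ∃ c : ℝ, x = c • u i)
    (hdist : ∀ i j, ∀ c : ℝ, u i = c • u j → i = j)
    (hker : ∀ x, x ≠ 0 → v x = 0 → ∀ h, fderiv ℝ v x h = 0 → ∃ c : ℝ, h = c • x) :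
    Odd (Fintype.card ι) := by
  obtain ⟨f, hf⟩ := Module.exists_dual_forall_apply_ne_zero (K := ℝ) u hu
  let y : E := (InnerProductSpace.toDual ℝ E).symm (LinearMap.toContinuousLinearMap f)
  have hy : ∀ x, (inner ℝ x y : ℝ) = f x := by
    intro x
    rw [real_inner_comm]
    simp [y]
  have hc : ∀ i, ∃ c : ℝ, c ≠ 0 ∧ ‖c • u i‖ = 1 ∧ 0 < c * f (u i) := by
    intro i
    have hn : 0 < ‖u i‖ := norm_pos_iff.2 (hu i)
    rcases (hf i).lt_or_gt with h | h
    · refine ⟨-‖u i‖⁻¹, by simp [hu], ?_, ?_⟩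
      · rw [norm_smul, norm_neg, norm_inv, norm_norm, inv_mul_cancel₀ hn.ne']
      · have := mul_pos (inv_pos.2 hn) (neg_pos.2 h)
        linarith
    · refine ⟨‖u i‖⁻¹, by simp [hu], ?_, ?_⟩
      · rw [norm_smul, norm_inv, norm_norm, inv_mul_cancel₀ hn.ne']
      · exact mul_pos (inv_pos.2 hn) h
  choose c hc0 hcn hcp using hc
  have hz : ∀ i, v (c i • u i) = 0 := fun i => by rw [hhom, huv, smul_zero]
  refine main_abs hp v hv hhom horth (fun i => c i • u i) hcn hz ?_ ?_ ?_ y ?_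
  · intro x hx hvx
    obtain ⟨i, d, h⟩ := hzero x hx hvx
    exact ⟨i, d * (c i)⁻¹, by rw [h, smul_smul, mul_assoc, inv_mul_cancel₀ (hc0 i), mul_one]⟩
  · intro i j d h
    refine hdist i j ((c i)⁻¹ * (d * c j)) ?_
    have h' : c i • u i = d • c j • u j := h
    rw [mul_smul, mul_smul, ← h', smul_smul, inv_mul_cancel₀ (hc0 i), one_smul]
  · intro i h hh
    exact hker _ (smul_ne_zero (hc0 i) (hu i)) (hz i) h hh
  · intro i
    rw [hy, map_smul]
    exact hcp i

end Field

lemma exists_iso {V : Type*} [AddCommGroup V] [Module ℝ V] [FiniteDimensional ℝ V]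
    (B : V →ₗ[ℝ] V →ₗ[ℝ] ℝ) (hsymm : ∀ x y, B x y = B y x)
    (hpos : ∀ x, x ≠ 0 → 0 < B x x) :
    ∃ T : V ≃ₗ[ℝ] EuclideanSpace ℝ (Fin (Module.finrank ℝ V)),
      ∀ x y, inner ℝ (T x) (T y) = B x y := by
  let cd : InnerProductSpace.Core ℝ V :=
    { inner := fun x y => B x y
      conj_inner_symm := fun x y => by simpa using hsymm y x
      re_inner_nonneg := fun x => by
        rcases eq_or_ne x 0 with rfl | h
        · simp
        · simpa using (hpos x h).le
      add_left := fun x y z => by simp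
      smul_left := fun x y r => by simp
      definite := fun x h => by
        by_contra hx
        exact (hpos x hx).ne' h }
  let _ : NormedAddCommGroup V := cd.toNormedAddCommGroup
  let _ : InnerProductSpace ℝ V := InnerProductSpace.ofCore cd.toCore
  let b := (stdOrthonormalBasis ℝ V).repr
  exact ⟨b.toLinearEquiv, fun x y => b.inner_map_map x y⟩

lemma ker_of_count {p : ℕ} (v : (Fin p → ℝ) → (Fin p → ℝ)) (ω : Fin p → ℝ) (hω : ω ≠ 0)
    (h0 : fderiv ℝ v ω ω = 0)
    (hnd : Multiset.count 0 ((jacobianMatrix v ω).charpoly.aroots ℂ) = 1)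
    (h : Fin p → ℝ) (hh : fderiv ℝ v ω h = 0) : ∃ c : ℝ, h = c • ω := by
  classical
  let A : Module.End ℝ (Fin p → ℝ) := (fderiv ℝ v ω).toLinearMap
  have hJ : jacobianMatrix v ω = LinearMap.toMatrix' A := by
    ext i j
    simp [jacobianMatrix, LinearMap.toMatrix'_apply, A, Pi.single_apply]
  have hch : (jacobianMatrix v ω).charpoly = A.charpoly := by
    rw [hJ, ← Matrix.charpoly_toLin', Matrix.toLin'_toMatrix']
  have hm : A.charpoly.rootMultiplicity 0 = 1 := by
    rw [hch, Polynomial.aroots_def] at hnd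
    rw [Polynomial.eq_rootMultiplicity_map (algebraMap ℝ ℂ).injective, map_zero,
      ← Polynomial.count_roots]
    convert hnd
  have hle := LinearMap.finrank_eigenspace_le A 0
  rw [hm] at hle
  have m1 : ω ∈ A.eigenspace 0 := by
    rw [Module.End.mem_eigenspace_iff, zero_smul]; exact h0
  have m2 : h ∈ A.eigenspace 0 := by
    rw [Module.End.mem_eigenspace_iff, zero_smul]; exact hh
  have hge : 0 < Module.finrank ℝ (A.eigenspace 0) := by
    have : Nontrivial (A.eigenspace 0) :=
      ⟨⟨⟨ω, m1⟩, 0, fun e => hω (congrArg Subtype.val e)⟩⟩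
    exact Module.finrank_pos
  obtain ⟨c, hc⟩ := exists_smul_eq_of_finrank_eq_one (K := ℝ) (V := A.eigenspace 0) (by omega)
    (x := ⟨ω, m1⟩) (fun e => hω (congrArg Subtype.val e)) ⟨h, m2⟩
  exact ⟨c, (congrArg Subtype.val hc).symm⟩

theorem odd_number_of_slsm_in_odd_dimension
    (p : ℕ) (hp : Odd p)
    (v : (Fin p → ℝ) → (Fin p → ℝ))
    (hcd : ContDiff ℝ 1 v)
    (hhom : ∀ (c : ℝ) (ω : Fin p → ℝ), v (c • ω) = c ^ 2 • v ω)
    (B : (Fin p → ℝ) →ₗ[ℝ] (Fin p → ℝ) →ₗ[ℝ] ℝ)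
    (hsymm : ∀ x y, B x y = B y x)
    (hposdef : ∀ x : Fin p → ℝ, x ≠ 0 → 0 < B x x)
    (hint : ∀ ω, B (v ω) ω = 0)
    (N : ℕ) (ℓ : Fin N → Submodule ℝ (Fin p → ℝ))
    (hdim : ∀ k, Module.finrank ℝ (ℓ k) = 1)
    (hdistinct : Function.Injective ℓ)
    (hzeros : {ω : Fin p → ℝ | ω ≠ 0 ∧ v ω = 0} =
      ⋃ k : Fin N, ((ℓ k : Set (Fin p → ℝ)) \ {0}))
    (hnd : ∀ ω : Fin p → ℝ, ω ≠ 0 → v ω = 0 →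
      Multiset.count 0 ((jacobianMatrix v ω).charpoly.aroots ℂ) = 1) :
    Odd N := by
  obtain ⟨T, hT⟩ := exists_iso B hsymm hposdef
  let Tc := T.toContinuousLinearEquiv
  have hTc : ∀ x, Tc x = T x := fun _ => rfl
  have hgen : ∀ k, ∃ w : Fin p → ℝ, w ≠ 0 ∧ ℓ k = Submodule.span ℝ {w} := by
    intro k
    obtain ⟨w, hw0, hw⟩ := finrank_eq_one_iff'.1 (hdim k)
    refine ⟨w, fun e => hw0 (Subtype.ext e), le_antisymm ?_ ?_⟩
    · intro x hx
      obtain ⟨c, hc⟩ := hw ⟨x, hx⟩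
      exact Submodule.mem_span_singleton.2 ⟨c, congrArg Subtype.val hc⟩
    · rw [Submodule.span_singleton_le_iff_mem]; exact w.2
  choose w hw0 hw using hgen
  have hmem : ∀ k, w k ∈ ℓ k := fun k => by rw [hw]; exact Submodule.mem_span_singleton_self _
  have hwv : ∀ k, v (w k) = 0 := by
    intro k
    have : w k ∈ {ω : Fin p → ℝ | ω ≠ 0 ∧ v ω = 0} := by
      rw [hzeros]; exact mem_iUnion.2 ⟨k, hmem k, hw0 k⟩
    exact this.2
  have heuler : ∀ ω, v ω = 0 → fderiv ℝ v ω ω = 0 := by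
    intro ω hω
    have d1 : HasDerivAt (fun t : ℝ => v (t • ω)) (fderiv ℝ v ω ω) 1 := by
      have e1 : HasFDerivAt v (fderiv ℝ v ω) ((1 : ℝ) • ω) := by
        rw [one_smul]; exact (hcd.differentiable one_ne_zero ω).hasFDerivAt
      have e2 : HasDerivAt (fun t : ℝ => t • ω) ω 1 := by
        simpa using (hasDerivAt_id (1 : ℝ)).smul_const ω
      exact e1.comp_hasDerivAt (1 : ℝ) e2
    have e : (fun t : ℝ => v (t • ω)) = fun _ => 0 := by
      ext1 t; rw [hhom, hω, smul_zero]
    rw [e] at d1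
    exact d1.unique (hasDerivAt_const _ _)
  let v' := Tc ∘ v ∘ Tc.symm
  have hv'app : ∀ x, v' x = T (v (T.symm x)) := fun _ => rfl
  have hv'0 : ∀ x, v' x = 0 → v (T.symm x) = 0 := by
    intro x hx
    rw [hv'app] at hx
    exact (LinearEquiv.map_eq_zero_iff T).1 hx
  have hfd : ∀ x h, fderiv ℝ v' x h = T (fderiv ℝ v (T.symm x) (T.symm h)) := by
    intro x h
    have e1 : fderiv ℝ v' x = _ := Tc.comp_fderiv
    rw [e1, Tc.symm.comp_right_fderiv]
    rfl
  have hfin : Odd (Fintype.card (Fin N)) := by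
    refine main_abs2 (E := EuclideanSpace ℝ (Fin (Module.finrank ℝ (Fin p → ℝ)))) ?_ v' ?_ ?_ ?_
      (fun k => T (w k)) ?_ ?_ ?_ ?_ ?_
    · simpa using hp
    · exact Tc.contDiff.comp (hcd.comp Tc.symm.contDiff)
    · intro c x
      rw [hv'app, hv'app, map_smul, hhom, map_smul]
    · intro x
      rw [hv'app]
      have := hT (v (T.symm x)) (T.symm x)
      rw [T.apply_symm_apply] at this
      rw [this, hint]
    · intro k h
      exact hw0 k ((LinearEquiv.map_eq_zero_iff T).1 h)
    · intro k
      rw [hv'app, T.symm_apply_apply, hwv, map_zero]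
    · intro x hx hvx
      have h1 : T.symm x ∈ {ω : Fin p → ℝ | ω ≠ 0 ∧ v ω = 0} :=
        ⟨fun e => hx ((LinearEquiv.map_eq_zero_iff T.symm).1 e), hv'0 x hvx⟩
      rw [hzeros] at h1
      obtain ⟨k, hk, -⟩ := mem_iUnion.1 h1
      have hk' : T.symm x ∈ ℓ k := hk
      rw [hw, Submodule.mem_span_singleton] at hk'
      obtain ⟨c, hc⟩ := hk'
      exact ⟨k, c, by rw [← map_smul, hc, T.apply_symm_apply]⟩
    · intro i j c h
      have h' : w i = c • w j := by
        apply T.injective; rw [map_smul]; exact h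
      have hc : c ≠ 0 := by
        rintro rfl
        exact hw0 i (by rw [h', zero_smul])
      apply hdistinct
      rw [hw i, hw j, h']
      exact Submodule.span_singleton_smul_eq (IsUnit.mk0 c hc) _
    · intro x hx hvx h hh
      rw [hfd] at hh
      have hx' : T.symm x ≠ 0 := fun e => hx ((LinearEquiv.map_eq_zero_iff T.symm).1 e)
      obtain ⟨c, hc⟩ := ker_of_count v (T.symm x) hx' (heuler _ (hv'0 x hvx))
        (hnd _ hx' (hv'0 x hvx)) (T.symm h) ((LinearEquiv.map_eq_zero_iff T).1 hh)
      refine ⟨c, ?_⟩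
      apply T.symm.injective
      rw [map_smul]; exact hc
  simpa using hfin
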